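/- arXiv:2105.11027 — 3 statements merged into one kernel-verified Lean document; each statement's English description precedes it below -/
import Mathlib

section
/- Let π be a finite-dimensional complex representation of GL_n(F_q). Suppose a+b ≤ n and c+d ≤ n, and that π has low rank for both U_{a,b} and U_{c,d}, i.e. rank_{a,b}(π) < min(a,b) and rank_{c,d}(π) < min(c,d). Then rank_{a,b}(π) = rank_{c,d}(π). -/
/-!
STATEMENT 0: If a finite-dimensional complex representation π of GL_n(F_q) has
low rank with respect to two standard matrix subgroups U_{a,b} and U_{c,d}
(i.e. rank < min a b, resp. rank < min c d), then the two ranks agree.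
-/

open Matrix
open scoped MatrixGroups

namespace Stmt0

variable {F : Type} [Field F] [Fintype F] [DecidableEq F]

/-- The `n × n` matrix with the `a × b` matrix `X` placed in the block occupying
rows `0,…,a-1` and columns `n-b,…,n-1`, and `0` elsewhere. -/
def blockEmbed (n a b : ℕ) (X : Matrix (Fin a) (Fin b) F) : Matrix (Fin n) (Fin n) F :=
  Matrix.of fun i j =>
    if hi : (i : ℕ) < a then
      if hj : n - b ≤ (j : ℕ) ∧ (j : ℕ) - (n - b) < b then
        X ⟨i, hi⟩ ⟨(j : ℕ) - (n - b), hj.2⟩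
      else 0
    else 0

lemma blockEmbed_mul_blockEmbed {n a b : ℕ} (hab : a + b ≤ n)
    (X Y : Matrix (Fin a) (Fin b) F) :
    blockEmbed n a b X * blockEmbed n a b Y = 0 := by
  ext i j
  rw [Matrix.mul_apply, Matrix.zero_apply]
  apply Finset.sum_eq_zero
  intro k _
  rcases Nat.lt_or_ge (k : ℕ) a with hk | hk
  · have h2 : ¬ (n - b ≤ (k : ℕ) ∧ (k : ℕ) - (n - b) < b) := by
      rintro ⟨h, -⟩; omega
    have hz : blockEmbed n a b X i k = 0 := by
      unfold blockEmbed
      by_cases hi : (i : ℕ) < a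
      · rw [Matrix.of_apply, dif_pos hi, dif_neg h2]
      · rw [Matrix.of_apply, dif_neg hi]
    rw [hz, zero_mul]
  · have hz : blockEmbed n a b Y k j = 0 := by
      unfold blockEmbed
      rw [Matrix.of_apply, dif_neg (Nat.not_lt.2 hk)]
    rw [hz, mul_zero]

/-- The element `I_n + blockEmbed X` of `GL_n(F)`; for `a + b ≤ n` these elements
form the abelian subgroup `U_{a,b}` (identified with `(M_{a,b}(F), +)`). -/
def uU (n a b : ℕ) (hab : a + b ≤ n) (X : Matrix (Fin a) (Fin b) F) : GL (Fin n) F where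
  val := 1 + blockEmbed n a b X
  inv := 1 - blockEmbed n a b X
  val_inv := by
    have h := blockEmbed_mul_blockEmbed hab X X
    have e : (1 + blockEmbed n a b X) * (1 - blockEmbed n a b X)
        = 1 - blockEmbed n a b X * blockEmbed n a b X := by noncomm_ring
    rw [e, h, sub_zero]
  inv_val := by
    have h := blockEmbed_mul_blockEmbed hab X X
    have e : (1 - blockEmbed n a b X) * (1 + blockEmbed n a b X)
        = 1 - blockEmbed n a b X * blockEmbed n a b X := by noncomm_ring
    rw [e, h, sub_zero]

variable {V : Type} [AddCommGroup V] [Module ℂ V]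

/-- The character `γ_T` of `U_{a,b} ≅ M_{a,b}(F_q)`, `γ_T(X) = χ₀(trace (T*X))`,
appears in (the restriction to `U_{a,b}` of) the representation `π`, i.e. its
eigenspace is nonzero. -/
def CharAppears (χ₀ : AddChar F ℂ) {n : ℕ} (π : Representation ℂ (GL (Fin n) F) V)
    {a b : ℕ} (hab : a + b ≤ n) (T : Matrix (Fin b) (Fin a) F) : Prop :=
  ∃ v : V, v ≠ 0 ∧ ∀ X : Matrix (Fin a) (Fin b) F,
    π (uU n a b hab X) v = χ₀ ((T * X).trace) • v

/-- `rank_{a,b}(π) = k` : the maximal rank of a character of `U_{a,b}`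
appearing in `π|U_{a,b}` is `k`.  (The rank of `γ_T` is `rank T`.) -/
def HasRankAB (χ₀ : AddChar F ℂ) {n : ℕ} (π : Representation ℂ (GL (Fin n) F) V)
    {a b : ℕ} (hab : a + b ≤ n) (k : ℕ) : Prop :=
  (∃ T, CharAppears χ₀ π hab T ∧ T.rank = k) ∧
  (∀ T, CharAppears χ₀ π hab T → T.rank ≤ k)

/-!
For `m` up to both sides of a block, a character of rank at least `m` appears on that block if and
only if one of rank exactly `m` appears on some `m × m` block, and all `m × m` blocks are conjugate
under permutation matrices.  Going down, a character of rank at least `m` restricts to a character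
of rank `m` on the sub-block of a nonvanishing `m × m` minor.  Going up, the larger block subgroup
is abelian, so it acts on the eigenspace of the given character of the sub-block; any of its
characters occurring there restricts to the given one, hence has at least its rank.  So the largest
rank appearing on a block depends only on `π` as long as it is smaller than both sides.
-/

section Scatter

variable {R p q s t u w : Type*} [CommSemiring R] [DecidableEq p] [DecidableEq q]
  [Fintype s] [Fintype t]

/-- The `p × q` matrix carrying the entries of `X` in the rows `e i` and columns `f j`, and zero
elsewhere.  It is written as a product with two selection matrices, so that it makes sense for all
`e` and `f`: when these are not injective, colliding entries are summed. -/
def scatter (e : s → p) (f : t → q) (X : Matrix s t R) : Matrix p q R :=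
  (1 : Matrix p p R).submatrix id e * X * (1 : Matrix q q R).submatrix f id

lemma scatter_zero (e : s → p) (f : t → q) : scatter e f (0 : Matrix s t R) = 0 := by
  simp [scatter]

lemma scatter_add (e : s → p) (f : t → q) (X Y : Matrix s t R) :
    scatter e f (X + Y) = scatter e f X + scatter e f Y := by
  simp only [scatter, Matrix.mul_add, Matrix.add_mul]

lemma scatter_apply_apply {e : s → p} {f : t → q} (he : e.Injective) (hf : f.Injective)
    (X : Matrix s t R) (i : s) (j : t) : scatter e f X (e i) (f j) = X i j := by
  classical
  simp [scatter, Matrix.mul_apply, Matrix.one_apply, he.eq_iff, hf.eq_iff]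

lemma scatter_apply_of_forall_ne_left {e : s → p} {i : p} (hi : ∀ k, e k ≠ i) (f : t → q)
    (X : Matrix s t R) (j : q) : scatter e f X i j = 0 := by
  simp [scatter, Matrix.mul_apply, Matrix.one_apply, fun k => (hi k).symm]

lemma scatter_apply_of_forall_ne_right (e : s → p) {f : t → q} {j : q} (hj : ∀ k, f k ≠ j)
    (X : Matrix s t R) (i : p) : scatter e f X i j = 0 := by
  simp [scatter, Matrix.mul_apply, Matrix.one_apply, hj]

lemma scatter_scatter [DecidableEq u] [DecidableEq w] [Fintype p] [Fintype q]
    (r : p → u) (c : q → w) (e : s → p) (f : t → q) (X : Matrix s t R) :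
    scatter r c (scatter e f X) = scatter (r ∘ e) (c ∘ f) X := by
  have rows : (1 : Matrix u u R).submatrix id r * (1 : Matrix p p R).submatrix id e =
      (1 : Matrix u u R).submatrix id (r ∘ e) :=
    Matrix.mul_submatrix_one (Equiv.refl p) e _
  have columns : (1 : Matrix q q R).submatrix f id * (1 : Matrix w w R).submatrix c id =
      (1 : Matrix w w R).submatrix (c ∘ f) id :=
    Matrix.one_submatrix_mul f (Equiv.refl q) _
  simp only [scatter, ← rows, ← columns, Matrix.mul_assoc]

lemma trace_mul_scatter [Fintype p] [Fintype q] (T : Matrix q p R) (e : s → p) (f : t → q)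
    (X : Matrix s t R) : (T * scatter e f X).trace = (T.submatrix f e * X).trace := by
  have columns : T * (1 : Matrix p p R).submatrix id e = T.submatrix id e :=
    Matrix.mul_submatrix_one (Equiv.refl p) e T
  have rows : (1 : Matrix q q R).submatrix f id * T.submatrix id e = T.submatrix f e :=
    Matrix.one_submatrix_mul f (Equiv.refl q) _
  rw [scatter, ← Matrix.mul_assoc, ← Matrix.mul_assoc, columns, Matrix.trace_mul_comm,
    ← Matrix.mul_assoc, rows]

lemma scatter_mul_scatter_eq_zero [Fintype p] {e : s → p} {f : t → p}
    (hef : ∀ i j, f j ≠ e i) (X Y : Matrix s t R) : scatter e f X * scatter e f Y = 0 := by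
  have cross : (1 : Matrix p p R).submatrix f id * (1 : Matrix p p R).submatrix id e = 0 := by
    ext j i
    simp [Matrix.mul_apply, Matrix.one_apply, hef i j]
  calc
    scatter e f X * scatter e f Y =
        (1 : Matrix p p R).submatrix id e * X *
          ((1 : Matrix p p R).submatrix f id * (1 : Matrix p p R).submatrix id e) *
          (Y * (1 : Matrix p p R).submatrix f id) := by simp only [scatter, Matrix.mul_assoc]
    _ = 0 := by rw [cross, Matrix.mul_zero, Matrix.zero_mul]

end Scatter

section BlockUnipotent

variable {R ι p q s t : Type*} [CommRing R] [Fintype ι] [DecidableEq ι] [Fintype p] [Fintype q]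
  [Fintype s] [Fintype t]

lemma scatter_inl_inr_mul_scatter_inl_inr (φ : p ⊕ q ↪ ι) (X Y : Matrix p q R) :
    scatter (φ ∘ Sum.inl) (φ ∘ Sum.inr) X * scatter (φ ∘ Sum.inl) (φ ∘ Sum.inr) Y = 0 :=
  scatter_mul_scatter_eq_zero (by simp) X Y

/-- The subgroup of `GL ι R` of matrices `1 + X`, with `X` supported on a `p × q` block whose rows
and columns are disjoint, as a homomorphism from the additive group of matrices.  The block is given
by a single embedding `φ`, with rows `φ (inl i)` and columns `φ (inr j)`. -/
def blockUnipotent (φ : p ⊕ q ↪ ι) : AddChar (Matrix p q R) (GL ι R) where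
  toFun X :=
    { val := 1 + scatter (φ ∘ Sum.inl) (φ ∘ Sum.inr) X
      inv := 1 - scatter (φ ∘ Sum.inl) (φ ∘ Sum.inr) X
      val_inv := by simp [mul_sub, add_mul, scatter_inl_inr_mul_scatter_inl_inr]
      inv_val := by simp [mul_add, sub_mul, scatter_inl_inr_mul_scatter_inl_inr] }
  map_zero_eq_one' := Units.ext (by simp [scatter_zero])
  map_add_eq_mul' X Y := Units.ext (by
    simp [scatter_add, mul_add, add_mul, add_assoc, scatter_inl_inr_mul_scatter_inl_inr])

lemma coe_blockUnipotent (φ : p ⊕ q ↪ ι) (X : Matrix p q R) :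
    (blockUnipotent φ X : Matrix ι ι R) = 1 + scatter (φ ∘ Sum.inl) (φ ∘ Sum.inr) X := rfl

lemma blockUnipotent_scatter [DecidableEq p] [DecidableEq q] (φ : p ⊕ q ↪ ι) (e : s ↪ p)
    (f : t ↪ q) (X : Matrix s t R) :
    blockUnipotent φ (scatter e f X) = blockUnipotent ((e.sumMap f).trans φ) X := by
  ext1
  rw [coe_blockUnipotent, coe_blockUnipotent, scatter_scatter]
  rfl

lemma exists_conj_blockUnipotent (φ ψ : p ⊕ q ↪ ι) :
    ∃ g : GL ι R, ∀ X, blockUnipotent ψ X * g = g * blockUnipotent φ X := by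
  obtain ⟨σ, hσ⟩ := Equiv.Perm.exists_extending_pair φ ψ φ.injective ψ.injective
  let g : GL ι R :=
    { val := (1 : Matrix ι ι R).submatrix id σ
      inv := (1 : Matrix ι ι R).submatrix σ id
      val_inv := by rw [Matrix.submatrix_mul_equiv, one_mul, Matrix.submatrix_id_id]
      inv_val := by
        rw [← Matrix.submatrix_mul _ _ _ _ _ Function.bijective_id, one_mul,
          Matrix.submatrix_one_equiv] }
  refine ⟨g, fun X => Units.ext ?_⟩
  have conj : scatter (ψ ∘ Sum.inl) (ψ ∘ Sum.inr) X =
      g * scatter (φ ∘ Sum.inl) (φ ∘ Sum.inr) X * (g⁻¹ : GL ι R) := by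
    rw [show (ψ : p ⊕ q → ι) = σ ∘ φ from funext fun i => (hσ i).symm]
    exact (scatter_scatter σ σ _ _ X).symm
  rw [Units.val_mul, Units.val_mul, coe_blockUnipotent, coe_blockUnipotent, conj, add_mul, mul_add,
    one_mul, mul_one, Units.inv_mul_cancel_right]

end BlockUnipotent

section Characters

/-- The character `γ_T : X ↦ χ (trace (T * X))` of the additive group of matrices. -/
def traceChar {R M p q : Type*} [CommRing R] [CommMonoid M] [Fintype p] [Fintype q]
    (χ : AddChar R M) (T : Matrix q p R) : AddChar (Matrix p q R) M where
  toFun X := χ (T * X).trace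
  map_zero_eq_one' := by simp
  map_add_eq_mul' X Y := by simp [Matrix.mul_add, AddChar.map_add_eq_mul]

variable {R M p q s t : Type*} [CommRing R] [CommMonoid M] [Fintype p] [Fintype q]
  [Fintype s] [Fintype t]

lemma traceChar_apply (χ : AddChar R M) (T : Matrix q p R) (X : Matrix p q R) :
    traceChar χ T X = χ (T * X).trace := rfl

lemma traceChar_scatter [DecidableEq p] [DecidableEq q] (χ : AddChar R M) (T : Matrix q p R)
    (e : s → p) (f : t → q) (X : Matrix s t R) :
    traceChar χ T (scatter e f X) = traceChar χ (T.submatrix f e) X := by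
  rw [traceChar_apply, traceChar_apply, trace_mul_scatter]

lemma traceChar_injective {χ : AddChar R M} (hχ : χ.IsPrimitive) :
    Function.Injective (traceChar (p := p) (q := q) χ) := by
  classical
  intro S T hST
  ext j i
  apply AddChar.to_mulShift_inj_of_isPrimitive hχ
  ext x
  simpa [traceChar_apply, Matrix.trace_mul_single, AddChar.mulShift_apply] using
    DFunLike.congr_fun hST (Matrix.single i j x)

lemma traceChar_surjective [Finite R] {χ : AddChar R ℂ} (hχ : χ.IsPrimitive) :
    Function.Surjective (traceChar (p := p) (q := q) χ) := by
  classical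
  have := Fintype.ofFinite R
  refine ((Fintype.bijective_iff_injective_and_card _).2 ⟨traceChar_injective hχ, ?_⟩).2
  rw [AddChar.card_eq]
  exact Fintype.card_congr (Matrix.transposeAddEquiv q p R).toEquiv

/-- The isotypic projections `∑ a, ψ (-a) • ρ a` add up to a nonzero multiple of the identity, so
one of them does not kill the given vector. -/
lemma exists_eigenvector_mem_of_invariant {A W : Type*} [AddCommGroup A] [Finite A]
    [AddCommGroup W] [Module ℂ W] (ρ : AddChar A (Module.End ℂ W)) {E : Submodule ℂ W}
    (hE : E ≠ ⊥) (hρ : ∀ a, ∀ w ∈ E, ρ a w ∈ E) :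
    ∃ ψ : AddChar A ℂ, ∃ w ∈ E, w ≠ 0 ∧ ∀ a, ρ a w = ψ a • w := by
  classical
  have := Fintype.ofFinite A
  obtain ⟨v, hvE, hv⟩ := E.exists_mem_ne_zero_of_ne_bot hE
  let proj (ψ : AddChar A ℂ) : W := ∑ a, ψ (-a) • ρ a v
  have sum_proj : ∑ ψ, proj ψ = (Fintype.card A : ℂ) • v := by
    simp only [proj]
    rw [Finset.sum_comm]
    simp [← Finset.sum_smul, AddChar.sum_apply_eq_ite]
  obtain ⟨ψ, hψ⟩ : ∃ ψ, proj ψ ≠ 0 := by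
    by_contra! h
    rw [Finset.sum_eq_zero fun ψ _ => h ψ] at sum_proj
    exact smul_ne_zero (Nat.cast_ne_zero.2 Fintype.card_ne_zero) hv sum_proj.symm
  refine ⟨ψ, proj ψ, E.sum_mem fun a _ => E.smul_mem _ (hρ a v hvE), hψ, fun b => ?_⟩
  calc
    ρ b (proj ψ) = ∑ a, ψ (-a) • ρ (b + a) v := by
      simp [proj, AddChar.map_add_eq_mul]
    _ = ∑ a, ψ b • ψ (-(b + a)) • ρ (b + a) v := by
      simp [smul_smul, ← AddChar.map_add_eq_mul]
    _ = ψ b • proj ψ := by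
      rw [← Finset.smul_sum]
      exact congrArg (ψ b • ·) (Equiv.sum_comp (Equiv.addLeft b) fun a => ψ (-a) • ρ a v)

end Characters

section BlockCharAppears

variable {R ι p q s t W : Type*} [CommRing R] [Fintype ι] [DecidableEq ι] [Fintype p] [Fintype q]
  [Fintype s] [Fintype t] [AddCommGroup W] [Module ℂ W]
  {χ : AddChar R ℂ} {π : Representation ℂ (GL ι R) W}

/-- The character `γ_T` of the block subgroup `blockUnipotent φ` appears in `π`.  For the upper
right corner block of `GL_n` this is `CharAppears`. -/
def BlockCharAppears (χ : AddChar R ℂ) (π : Representation ℂ (GL ι R) W) (φ : p ⊕ q ↪ ι)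
    (T : Matrix q p R) : Prop :=
  ∃ v : W, v ≠ 0 ∧ ∀ X, π (blockUnipotent φ X) v = traceChar χ T X • v

lemma BlockCharAppears.submatrix {φ : p ⊕ q ↪ ι} {T : Matrix q p R}
    (hT : BlockCharAppears χ π φ T) (e : s ↪ p) (f : t ↪ q) :
    BlockCharAppears χ π ((e.sumMap f).trans φ) (T.submatrix f e) := by
  classical
  obtain ⟨v, hv, hTv⟩ := hT
  refine ⟨v, hv, fun X => ?_⟩
  rw [← blockUnipotent_scatter, hTv, traceChar_scatter]

lemma BlockCharAppears.transport {φ : p ⊕ q ↪ ι} {T : Matrix q p R}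
    (hT : BlockCharAppears χ π φ T) (ψ : p ⊕ q ↪ ι) : BlockCharAppears χ π ψ T := by
  obtain ⟨v, hv, hTv⟩ := hT
  obtain ⟨g, hg⟩ := exists_conj_blockUnipotent (R := R) φ ψ
  refine ⟨π g v, (map_ne_zero_iff _ (π.apply_bijective g).injective).2 hv, fun X => ?_⟩
  rw [← Module.End.mul_apply, ← map_mul, hg, map_mul, Module.End.mul_apply, hTv, map_smul]

/-- Abelianness of `blockUnipotent φ` is what makes the eigenspace of `S` invariant under it. -/
lemma BlockCharAppears.exists_submatrix_eq [Finite R] (hχ : χ.IsPrimitive) {φ : p ⊕ q ↪ ι}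
    {e : s ↪ p} {f : t ↪ q} {S : Matrix t s R}
    (hS : BlockCharAppears χ π ((e.sumMap f).trans φ) S) :
    ∃ T, BlockCharAppears χ π φ T ∧ T.submatrix f e = S := by
  classical
  obtain ⟨v, hv, hSv⟩ := hS
  simp only [← blockUnipotent_scatter] at hSv
  let ρ : AddChar (Matrix p q R) (Module.End ℂ W) := π.compAddChar (blockUnipotent φ)
  let E : Submodule ℂ W := ⨅ X, Module.End.eigenspace (ρ (scatter e f X)) (traceChar χ S X)
  have mem_E (w : W) : w ∈ E ↔ ∀ X, ρ (scatter e f X) w = traceChar χ S X • w := by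
    simp [E]
  have E_ne_bot : E ≠ ⊥ := E.ne_bot_iff.2 ⟨v, (mem_E v).2 hSv, hv⟩
  have E_invariant (Y : Matrix p q R) (w : W) (hw : w ∈ E) : ρ Y w ∈ E := by
    rw [mem_E] at hw ⊢
    intro X
    rw [← Module.End.mul_apply, ← AddChar.map_add_eq_mul, add_comm, AddChar.map_add_eq_mul,
      Module.End.mul_apply, hw, map_smul]
  obtain ⟨ψ, w, hwE, hw, hψ⟩ := exists_eigenvector_mem_of_invariant ρ E_ne_bot E_invariant
  obtain ⟨T, rfl⟩ := traceChar_surjective hχ ψ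
  refine ⟨T, ⟨w, hw, hψ⟩, traceChar_injective hχ (DFunLike.ext _ _ fun X => ?_)⟩
  apply smul_left_injective ℂ hw
  calc
    traceChar χ (T.submatrix f e) X • w = ρ (scatter e f X) w := by
      rw [hψ, traceChar_scatter]
    _ = traceChar χ S X • w := (mem_E w).1 hwE X

end BlockCharAppears

section Minors

variable {K p q : Type*} [Field K] [Fintype q] {m : ℕ}

lemma exists_rows_rank_eq [Finite p] (T : Matrix p q K) (hm : m ≤ T.rank) :
    ∃ f : Fin m ↪ p, (T.submatrix f id).rank = m := by
  obtain ⟨κ, g, hg, hspan, hli⟩ := exists_linearIndependent' K T.row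
  have : Finite κ := Finite.of_injective g hg
  have := Fintype.ofFinite κ
  have rank_eq : T.rank = Fintype.card κ := by
    rw [Matrix.rank_eq_finrank_span_row, ← hspan, finrank_span_eq_card hli]
  obtain ⟨i⟩ : Nonempty (Fin m ↪ κ) :=
    Function.Embedding.nonempty_of_card_le (by simpa [← rank_eq] using hm)
  refine ⟨i.trans ⟨g, hg⟩, ?_⟩
  have rows_li : LinearIndependent K (T.submatrix (i.trans ⟨g, hg⟩) id).row :=
    hli.comp i i.injective
  simpa using rows_li.rank_matrix

lemma exists_minor_rank_eq [Finite p] (T : Matrix p q K) (hm : m ≤ T.rank) :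
    ∃ (f : Fin m ↪ p) (e : Fin m ↪ q), (T.submatrix f e).rank = m := by
  obtain ⟨f, hf⟩ := exists_rows_rank_eq T hm
  obtain ⟨e, he⟩ := exists_rows_rank_eq (T.submatrix f id)ᵀ (by rw [Matrix.rank_transpose, hf])
  refine ⟨f, e, ?_⟩
  rwa [← Matrix.rank_transpose]

end Minors

section BlockRank

variable {K ι p q p' q' W : Type*} [Field K] [Finite K] [Fintype ι] [DecidableEq ι]
  [Fintype p] [Fintype q] [Fintype p'] [Fintype q'] [AddCommGroup W] [Module ℂ W]
  {χ : AddChar K ℂ} {π : Representation ℂ (GL ι K) W}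

lemma BlockCharAppears.exists_le_rank (hχ : χ ≠ 1) {φ : p ⊕ q ↪ ι} {T : Matrix q p K}
    (hT : BlockCharAppears χ π φ T) (φ' : p' ⊕ q' ↪ ι) {m : ℕ} (hm : m ≤ T.rank)
    (hp' : m ≤ Fintype.card p') (hq' : m ≤ Fintype.card q') :
    ∃ T', BlockCharAppears χ π φ' T' ∧ m ≤ T'.rank := by
  obtain ⟨f, e, hfe⟩ := exists_minor_rank_eq T hm
  obtain ⟨e'⟩ : Nonempty (Fin m ↪ p') := Function.Embedding.nonempty_of_card_le (by simpa)
  obtain ⟨f'⟩ : Nonempty (Fin m ↪ q') := Function.Embedding.nonempty_of_card_le (by simpa)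
  obtain ⟨T', hT', hsub⟩ := ((hT.submatrix e f).transport
    ((e'.sumMap f').trans φ')).exists_submatrix_eq (AddChar.IsPrimitive.of_ne_one hχ)
  exact ⟨T', hT', hfe ▸ hsub ▸ Matrix.rank_submatrix_le T' f' e'⟩

/-- The largest rank of a character of `blockUnipotent φ` appearing in `π` is `k`. -/
def HasBlockRank (χ : AddChar K ℂ) (π : Representation ℂ (GL ι K) W) (φ : p ⊕ q ↪ ι) (k : ℕ) :
    Prop :=
  IsGreatest {r | ∃ T, BlockCharAppears χ π φ T ∧ T.rank = r} k

lemma HasBlockRank.le_of_lt_min (hχ : χ ≠ 1) {φ : p ⊕ q ↪ ι} {φ' : p' ⊕ q' ↪ ι} {k k' : ℕ}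
    (hk : HasBlockRank χ π φ k) (hk' : HasBlockRank χ π φ' k')
    (hlow : k < min (Fintype.card p) (Fintype.card q)) : k' ≤ k := by
  by_contra! hlt
  obtain ⟨T', hT', rfl⟩ := hk'.1
  obtain ⟨T, hT, hrank⟩ := hT'.exists_le_rank hχ φ (m := k + 1) hlt (by omega) (by omega)
  exact (hk.2 ⟨T, hT, rfl⟩).not_gt hrank

theorem rank_eq_of_lowRank_general (hχ : χ ≠ 1) {φ : p ⊕ q ↪ ι} {φ' : p' ⊕ q' ↪ ι} {k k' : ℕ}
    (hk : HasBlockRank χ π φ k) (hk' : HasBlockRank χ π φ' k')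
    (hlow : k < min (Fintype.card p) (Fintype.card q))
    (hlow' : k' < min (Fintype.card p') (Fintype.card q')) : k = k' :=
  (hk'.le_of_lt_min hχ hk hlow').antisymm (hk.le_of_lt_min hχ hk' hlow)

end BlockRank

section Corner

variable {n a b : ℕ}

/-- The position of the block of `U_{a,b}`: the first `a` rows and the last `b` columns. -/
def cornerBlock (hab : a + b ≤ n) : Fin a ⊕ Fin b ↪ Fin n where
  toFun := Sum.elim (fun i => ⟨i, by omega⟩) (fun j => ⟨n - b + j, by omega⟩)
  inj' := by
    rintro (i | i) (j | j) hij <;>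
      simp only [Sum.elim_inl, Sum.elim_inr, Sum.inl.injEq, Sum.inr.injEq,
        Fin.ext_iff, reduceCtorEq] at hij ⊢ <;> omega

lemma blockEmbed_eq_scatter {K : Type} [Field K] (hab : a + b ≤ n)
    (X : Matrix (Fin a) (Fin b) K) :
    blockEmbed n a b X = scatter (cornerBlock hab ∘ Sum.inl) (cornerBlock hab ∘ Sum.inr) X := by
  ext i j
  simp only [blockEmbed, Matrix.of_apply]
  split_ifs with hi hj
  · have hi' : i = (cornerBlock hab ∘ Sum.inl) ⟨i, hi⟩ := rfl
    have hj' : j = (cornerBlock hab ∘ Sum.inr) ⟨j - (n - b), hj.2⟩ :=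
      Fin.ext (Nat.add_sub_of_le hj.1).symm
    conv_rhs => rw [hi', hj']
    exact (scatter_apply_apply ((cornerBlock hab).injective.comp Sum.inl_injective)
      ((cornerBlock hab).injective.comp Sum.inr_injective) X _ _).symm
  · refine (scatter_apply_of_forall_ne_right _ ?_ X i).symm
    rintro k rfl
    change ¬(n - b ≤ n - b + (k : ℕ) ∧ n - b + (k : ℕ) - (n - b) < b) at hj
    omega
  · refine (scatter_apply_of_forall_ne_left ?_ _ X j).symm
    rintro k rfl
    exact hi k.isLt

lemma uU_eq_blockUnipotent (hab : a + b ≤ n) (X : Matrix (Fin a) (Fin b) F) :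
    uU n a b hab X = blockUnipotent (cornerBlock hab) X :=
  Units.ext (congrArg (1 + ·) (blockEmbed_eq_scatter hab X))

lemma charAppears_iff {χ₀ : AddChar F ℂ} {π : Representation ℂ (GL (Fin n) F) V}
    (hab : a + b ≤ n) (T : Matrix (Fin b) (Fin a) F) :
    CharAppears χ₀ π hab T ↔ BlockCharAppears χ₀ π (cornerBlock hab) T := by
  simp only [CharAppears, BlockCharAppears, uU_eq_blockUnipotent, traceChar_apply]

lemma HasRankAB.hasBlockRank {χ₀ : AddChar F ℂ} {π : Representation ℂ (GL (Fin n) F) V}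
    {hab : a + b ≤ n} {k : ℕ} (h : HasRankAB χ₀ π hab k) :
    HasBlockRank χ₀ π (cornerBlock hab) k := by
  simp only [HasRankAB, charAppears_iff] at h
  exact ⟨h.1, fun _ ⟨T, hT, hr⟩ => hr ▸ h.2 T hT⟩

end Corner

/-- Proposition 4.2.2. If `π` has low rank for the standard
subgroups `U_{a,b}` and `U_{c,d}`, then `rank_{a,b}(π) = rank_{c,d}(π)`. -/
theorem rank_eq_of_lowRank
    (χ₀ : AddChar F ℂ) (hχ₀ : χ₀ ≠ 1)
    {n : ℕ} {V : Type} [AddCommGroup V] [Module ℂ V] [FiniteDimensional ℂ V]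
    (π : Representation ℂ (GL (Fin n) F) V)
    {a b c d : ℕ} (hab : a + b ≤ n) (hcd : c + d ≤ n)
    {k₁ k₂ : ℕ}
    (h₁ : HasRankAB χ₀ π hab k₁) (h₂ : HasRankAB χ₀ π hcd k₂)
    (hlow₁ : k₁ < min a b) (hlow₂ : k₂ < min c d) :
    k₁ = k₂ := by
  exact rank_eq_of_lowRank_general hχ₀ h₁.hasBlockRank h₂.hasBlockRank
    (by simpa using hlow₁) (by simpa using hlow₂)

end Stmt0
end

section
/- Let k ≤ n/2 and let ω be the permutation representation of GL_n(F_q) × GL_k(F_q) on the complex-valued functions on M_{n,k}(F_q), given by ((g,h)·f)(T) = f(g^{-1}Th). Then: (1) the restriction of ω to GL_n(F_q) has U-rank k; (2) for each irreducible representation ν of GL_k(F_q), writing the ν-isotypic component of ω|_{GL_k} as Ξ_ν ⊗ ν with Ξ_ν a representation of GL_n(F_q), Ξ_ν contains a unique irreducible subrepresentation η(ν) of U-rank k, it occurs with multiplicity one, every other irreducible constituent of Ξ_ν has U-rank < k, and ν ↦ η(ν) is injective from the irreducible representations of GL_k(F_q) into the irreducible representations of GL_n(F_q) of U-rank k. 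-/
/-!
STATEMENT 7: The eta correspondence for the dual pair (GL_n, GL_k), k ≤ n/2:
the restriction to GL_n of the permutation representation ω on functions on
M_{n,k}(F_q) has U-rank k; for each irreducible ν of GL_k the GL_n-module
Ξ_ν = Hom_{GL_k}(ν, ω) contains a unique irreducible subrepresentation η(ν) of
U-rank k, with multiplicity one, all other constituents having lower U-rank,
and ν ↦ η(ν) is injective.
-/

open Matrix
open scoped MatrixGroups

namespace Stmt7

variable {F : Type} [Field F] [Fintype F] [DecidableEq F]

/-- The `n × n` matrix with the `a × b` matrix `X` placed in the block occupying
rows `0,…,a-1` and columns `n-b,…,n-1`, and `0` elsewhere. -/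
def blockEmbed (n a b : ℕ) (X : Matrix (Fin a) (Fin b) F) : Matrix (Fin n) (Fin n) F :=
  Matrix.of fun i j =>
    if hi : (i : ℕ) < a then
      if hj : n - b ≤ (j : ℕ) ∧ (j : ℕ) - (n - b) < b then
        X ⟨i, hi⟩ ⟨(j : ℕ) - (n - b), hj.2⟩
      else 0
    else 0

lemma blockEmbed_mul_blockEmbed {n a b : ℕ} (hab : a + b ≤ n)
    (X Y : Matrix (Fin a) (Fin b) F) :
    blockEmbed n a b X * blockEmbed n a b Y = 0 := by
  ext i j
  rw [Matrix.mul_apply, Matrix.zero_apply]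
  apply Finset.sum_eq_zero
  intro k _
  rcases Nat.lt_or_ge (k : ℕ) a with hk | hk
  · have h2 : ¬ (n - b ≤ (k : ℕ) ∧ (k : ℕ) - (n - b) < b) := by
      rintro ⟨h, -⟩; omega
    have hz : blockEmbed n a b X i k = 0 := by
      unfold blockEmbed
      by_cases hi : (i : ℕ) < a
      · rw [Matrix.of_apply, dif_pos hi, dif_neg h2]
      · rw [Matrix.of_apply, dif_neg hi]
    rw [hz, zero_mul]
  · have hz : blockEmbed n a b Y k j = 0 := by
      unfold blockEmbed
      rw [Matrix.of_apply, dif_neg (Nat.not_lt.2 hk)]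
    rw [hz, mul_zero]

/-- The element `I_n + blockEmbed X` of `GL_n(F)`; for `a + b ≤ n` these elements
form the abelian subgroup `U_{a,b}` (identified with `(M_{a,b}(F), +)`). -/
def uU (n a b : ℕ) (hab : a + b ≤ n) (X : Matrix (Fin a) (Fin b) F) : GL (Fin n) F where
  val := 1 + blockEmbed n a b X
  inv := 1 - blockEmbed n a b X
  val_inv := by
    have h := blockEmbed_mul_blockEmbed hab X X
    have e : (1 + blockEmbed n a b X) * (1 - blockEmbed n a b X)
        = 1 - blockEmbed n a b X * blockEmbed n a b X := by noncomm_ring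
    rw [e, h, sub_zero]
  inv_val := by
    have h := blockEmbed_mul_blockEmbed hab X X
    have e : (1 - blockEmbed n a b X) * (1 + blockEmbed n a b X)
        = 1 - blockEmbed n a b X * blockEmbed n a b X := by noncomm_ring
    rw [e, h, sub_zero]

variable {V : Type} [AddCommGroup V] [Module ℂ V]

/-- The character `γ_T` of `U_{a,b} ≅ M_{a,b}(F_q)`, `γ_T(X) = χ₀(trace (T*X))`,
appears in (the restriction to `U_{a,b}` of) the representation `π`, i.e. its
eigenspace is nonzero. -/
def CharAppears (χ₀ : AddChar F ℂ) {n : ℕ} (π : Representation ℂ (GL (Fin n) F) V)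
    {a b : ℕ} (hab : a + b ≤ n) (T : Matrix (Fin b) (Fin a) F) : Prop :=
  ∃ v : V, v ≠ 0 ∧ ∀ X : Matrix (Fin a) (Fin b) F,
    π (uU n a b hab X) v = χ₀ ((T * X).trace) • v

/-- `rank_{a,b}(π) = k` : the maximal rank of a character of `U_{a,b}`
appearing in `π|U_{a,b}` is `k`.  (The rank of `γ_T` is `rank T`.) -/
def HasRankAB (χ₀ : AddChar F ℂ) {n : ℕ} (π : Representation ℂ (GL (Fin n) F) V)
    {a b : ℕ} (hab : a + b ≤ n) (k : ℕ) : Prop :=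
  (∃ T, CharAppears χ₀ π hab T ∧ T.rank = k) ∧
  (∀ T, CharAppears χ₀ π hab T → T.rank ≤ k)


/-- The `U`-rank of a representation `π` of `GL_n(F_q)` equals `k`:
this is `rank_{⌊n/2⌋,⌈n/2⌉}(π) = k`. -/
def HasURank (χ₀ : AddChar F ℂ) {n : ℕ} (π : Representation ℂ (GL (Fin n) F) V) (k : ℕ) : Prop :=
  HasRankAB χ₀ π (show n / 2 + (n - n / 2) ≤ n by omega) k

/-- The permutation representation `ω` of `GL_n(F) × GL_k(F)` on complex-valued
functions on `M_{n,k}(F)` : `((g,h)·f)(T) = f (g⁻¹ * T * h)`. -/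
noncomputable def omegaRep (n k : ℕ) :
    Representation ℂ (GL (Fin n) F × GL (Fin k) F) (Matrix (Fin n) (Fin k) F → ℂ) where
  toFun p :=
    { toFun := fun f T =>
        f ((↑p.1⁻¹ : Matrix (Fin n) (Fin n) F) * T * (↑p.2 : Matrix (Fin k) (Fin k) F))
      map_add' := fun _ _ => rfl
      map_smul' := fun _ _ => rfl }
  map_one' := by
    refine LinearMap.ext fun f => funext fun T => ?_
    show f _ = f T
    congr 1
    simp
  map_mul' := by
    intro p q
    refine LinearMap.ext fun f => funext fun T => ?_
    show f _ = f _
    congr 1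
    simp [Prod.fst_mul, Prod.snd_mul, _root_.mul_inv_rev, Units.val_mul, Matrix.mul_assoc]

/-- The restriction of `ω` to `GL_n(F)` (acting by `(g·f)(T) = f(g⁻¹ T)`). -/
noncomputable def lambdaRep (n k : ℕ) :
    Representation ℂ (GL (Fin n) F) (Matrix (Fin n) (Fin k) F → ℂ) :=
  (omegaRep n k).comp (MonoidHom.inl _ _)

/-- The restriction of `ω` to `GL_k(F)` (acting by `(h·f)(T) = f(T h)`). -/
noncomputable def rRep (n k : ℕ) :
    Representation ℂ (GL (Fin k) F) (Matrix (Fin n) (Fin k) F → ℂ) :=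
  (omegaRep n k).comp (MonoidHom.inr _ _)

lemma lambda_r_comm (n k : ℕ) (g : GL (Fin n) F) (h : GL (Fin k) F) :
    lambdaRep n k g * rRep n k h = rRep n k h * lambdaRep n k g := by
  unfold lambdaRep rRep
  simp only [MonoidHom.comp_apply, MonoidHom.inl_apply, MonoidHom.inr_apply]
  rw [← _root_.map_mul, ← _root_.map_mul]
  congr 1
  simp [Prod.ext_iff]

/-- The space `Hom_H(ν, σ)` of intertwining operators from `ν` to `σ`. -/
def interSub {H : Type} [Group H] {Vν M : Type} [AddCommGroup Vν] [Module ℂ Vν]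
    [AddCommGroup M] [Module ℂ M]
    (ν : Representation ℂ H Vν) (σ : Representation ℂ H M) :
    Submodule ℂ (Vν →ₗ[ℂ] M) where
  carrier := {φ | ∀ h v, φ (ν h v) = σ h (φ v)}
  add_mem' := by
    intro φ ψ hφ hψ h v
    simp [LinearMap.add_apply, hφ h v, hψ h v]
  zero_mem' := by intro h v; simp
  smul_mem' := by
    intro c φ hφ h v
    simp [LinearMap.smul_apply, hφ h v]

/-- The representation `Ξ_ν` of `GL_n(F)` on `Hom_{GL_k}(ν, ω)`, acting by
post-composition; this realizes the `ν`-isotypic component `Ξ_ν ⊗ ν` of `ω`. -/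
noncomputable def XiRep (n k : ℕ) {Vν : Type} [AddCommGroup Vν] [Module ℂ Vν]
    (ν : Representation ℂ (GL (Fin k) F) Vν) :
    Representation ℂ (GL (Fin n) F) ↥(interSub ν (rRep n k)) where
  toFun g :=
    { toFun := fun φ => ⟨(lambdaRep n k g).comp (φ : Vν →ₗ[ℂ] _), by
        intro h v
        simp only [LinearMap.comp_apply]
        rw [φ.2 h v]
        exact LinearMap.congr_fun (lambda_r_comm n k g h) ((φ : Vν →ₗ[ℂ] _) v)⟩
      map_add' := by
        intro φ ψ
        refine Subtype.ext (LinearMap.ext fun v => ?_)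
        simp
      map_smul' := by
        intro c φ
        refine Subtype.ext (LinearMap.ext fun v => ?_)
        simp }
  map_one' := by
    refine LinearMap.ext fun φ => Subtype.ext (LinearMap.ext fun v => ?_)
    simp [_root_.map_one]
  map_mul' := by
    intro g h
    refine LinearMap.ext fun φ => Subtype.ext (LinearMap.ext fun v => ?_)
    simp [_root_.map_mul]

/-- Restriction of a representation to an invariant submodule. -/
noncomputable def subRep {G V : Type} [Group G] [AddCommGroup V] [Module ℂ V]
    (ρ : Representation ℂ G V) (N : Submodule ℂ V)
    (hN : ∀ g : G, ∀ v ∈ N, ρ g v ∈ N) : Representation ℂ G ↥N where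
  toFun g := (ρ g).restrict (fun v hv => hN g v hv)
  map_one' := by
    refine LinearMap.ext fun v => Subtype.ext ?_
    simp [LinearMap.restrict_apply]
  map_mul' := by
    intro g h
    refine LinearMap.ext fun v => Subtype.ext ?_
    simp [LinearMap.restrict_apply, _root_.map_mul]

/-- Equivalence (isomorphism) of two representations of a group `G`. -/
def RepEquiv {G V₁ V₂ : Type} [Group G] [AddCommGroup V₁] [Module ℂ V₁]
    [AddCommGroup V₂] [Module ℂ V₂]
    (ρ₁ : Representation ℂ G V₁) (ρ₂ : Representation ℂ G V₂) : Prop :=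
  ∃ e : V₁ ≃ₗ[ℂ] V₂, ∀ g v, e (ρ₁ g v) = ρ₂ g (e v)

/-- Irreducibility of a representation: the space is nonzero, and the only
invariant subspaces are `⊥` and `⊤`. -/
def IsIrred {G : Type} [Group G] {V : Type} [AddCommGroup V] [Module ℂ V]
    (ρ : Representation ℂ G V) : Prop :=
  (∃ v : V, v ≠ 0) ∧
    ∀ p : Submodule ℂ V, (∀ g : G, ∀ v ∈ p, ρ g v ∈ p) → p = ⊥ ∨ p = ⊤

/-!
Write a matrix in `M_{a+b,k}` as a pair of blocks `(P, Q)` of `a` and `b` rows.  The subgroup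
`U_{a,b}` acts by translating `P` by multiples of `Q`, so a `γ_S`-eigenfunction `f` satisfies
`f (P - X Q, Q) = χ₀(tr(S X)) f (P, Q)`.  If `f` does not vanish at `(P, Q)` then `S = Q C` for
some `C`, whence `rank S ≤ k`.  If moreover `S = B C` has rank `k`, then `Q` has the same column
space as `B`, so `f` is determined by its values at the points `(0, B m)` with `m ∈ GL_k`, and
these values are arbitrary.  Evaluation at `(0, B)` therefore identifies the `γ_S`-eigenspace of
`Ξ_ν` with the dual of `ν`, and elements of the Levi subgroup stabilizing `γ_S` realize the action
of `GL_k` there.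

As this eigenspace is irreducible under those elements, a subrepresentation of `Ξ_ν` either
contains it or meets it trivially; all characters of rank `k` being conjugate, the first case is
exactly that of rank `k`.  By semisimplicity the subrepresentation `η(ν)` generated by the
eigenspace is the only irreducible one of rank `k`, and its eigenspace recovers `ν`.
-/

section MatrixRank

variable {K ι κ : Type*} [Field K] [Fintype ι] [Fintype κ]

lemma exists_fullRank_factorization {k : ℕ} {A : Matrix ι κ K} (hA : A.rank = k) :
    ∃ (B : Matrix ι (Fin k) K) (C : Matrix (Fin k) κ K) (L : Matrix (Fin k) ι K)
      (R : Matrix κ (Fin k) K), A = B * C ∧ L * B = 1 ∧ C * R = 1 := by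
  classical
  let f := toLin' A
  let e : LinearMap.range f ≃ₗ[K] (Fin k → K) :=
    LinearEquiv.ofFinrankEq _ _ (by rw [Module.finrank_fin_fun]; exact hA)
  let β : (Fin k → K) →ₗ[K] (ι → K) := (LinearMap.range f).subtype ∘ₗ e.symm.toLinearMap
  let γ : (κ → K) →ₗ[K] (Fin k → K) := e.toLinearMap ∘ₗ f.rangeRestrict
  obtain ⟨left, hleft⟩ := β.exists_leftInverse_of_injective
    (LinearMap.ker_eq_bot.2 ((Submodule.subtype_injective _).comp e.symm.injective))
  obtain ⟨right, hright⟩ := γ.exists_rightInverse_of_surjective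
    (LinearMap.range_eq_top.2 (e.surjective.comp f.surjective_rangeRestrict))
  have hβγ : f = β ∘ₗ γ := by ext; simp [β, γ]
  refine ⟨LinearMap.toMatrix' β, LinearMap.toMatrix' γ, LinearMap.toMatrix' left,
    LinearMap.toMatrix' right, ?_, ?_, ?_⟩
  · rw [← LinearMap.toMatrix'_comp, ← hβγ, LinearMap.toMatrix'_toLin']
  · rw [← LinearMap.toMatrix'_comp, hleft, LinearMap.toMatrix'_id]
  · rw [← LinearMap.toMatrix'_comp, hright, LinearMap.toMatrix'_id]

lemma exists_mul_mul_eq_self (A : Matrix ι κ K) : ∃ G : Matrix κ ι K, A * G * A = A := by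
  obtain ⟨k, hk⟩ : ∃ k, A.rank = k := ⟨_, rfl⟩
  obtain ⟨B, C, L, R, rfl, hL, hR⟩ := exists_fullRank_factorization hk
  refine ⟨R * L, ?_⟩
  calc B * C * (R * L) * (B * C) = B * (C * R) * (L * B) * C := by simp only [Matrix.mul_assoc]
    _ = B * C := by rw [hR, hL, Matrix.mul_one, Matrix.mul_one]

lemma toLin'_injective_of_mul_eq_one [DecidableEq κ] {B : Matrix ι κ K} {L : Matrix κ ι K}
    (h : L * B = 1) : Function.Injective (toLin' B) := by
  classical
  refine Function.LeftInverse.injective (g := toLin' L) fun v ↦ ?_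
  rw [← toLin'_mul_apply, h, toLin'_one, LinearMap.id_apply]

lemma exists_GL_mul_eq_of_mul_eq_one [DecidableEq ι] {l : Type*} [Finite l] [DecidableEq l]
    {B B' : Matrix ι l K} {L L' : Matrix l ι K} (h : L * B = 1) (h' : L' * B' = 1) :
    ∃ D : GL ι K, D.val * B = B' := by
  have := Fintype.ofFinite l
  let e := LinearEquiv.ofInjective (toLin' B) (toLin'_injective_of_mul_eq_one h)
  let e' := LinearEquiv.ofInjective (toLin' B') (toLin'_injective_of_mul_eq_one h')
  obtain ⟨g, hg⟩ := Submodule.exists_linearEquiv_restrict_eq (e.symm.trans e')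
  have hgB : g.toLinearMap ∘ₗ toLin' B = toLin' B' := LinearMap.ext fun v ↦ by
    have := hg (e v)
    rw [LinearEquiv.trans_apply, LinearEquiv.symm_apply_apply] at this
    exact this.symm
  obtain ⟨D, hD⟩ : IsUnit (LinearMap.toMatrix' g.toLinearMap) :=
    LinearMap.isUnit_toMatrix'_iff.2 ((Module.End.isUnit_iff _).2 g.bijective)
  exact ⟨D, toLin'.injective (by rw [toLin'_mul, hD, toLin'_toMatrix', hgB])⟩

lemma exists_mul_GL_eq_of_mul_eq_one [DecidableEq κ] {l : Type*} [Finite l] [DecidableEq l]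
    {C C' : Matrix l κ K} {R R' : Matrix κ l K} (h : C * R = 1) (h' : C' * R' = 1) :
    ∃ A : GL κ K, C * A.val = C' := by
  obtain ⟨A, hAC⟩ := exists_GL_mul_eq_of_mul_eq_one (B := Cᵀ) (B' := C'ᵀ) (L := Rᵀ)
    (L' := R'ᵀ) (by rw [← transpose_mul, h, transpose_one])
    (by rw [← transpose_mul, h', transpose_one])
  obtain ⟨A', hA'⟩ : IsUnit A.valᵀ := A.val.isUnit_transpose.2 A.isUnit
  exact ⟨A', by simpa [hA'] using congrArg transpose hAC⟩

lemma exists_GL_mul_eq_mul_GL_of_rank_eq [DecidableEq ι] [DecidableEq κ]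
    {S S' : Matrix ι κ K} (h : S.rank = S'.rank) :
    ∃ (D : GL ι K) (A : GL κ K), D.val * S = S' * A.val := by
  obtain ⟨B, C, L, R, rfl, hL, hR⟩ := exists_fullRank_factorization h
  obtain ⟨B', C', L', R', hS', hL', hR'⟩ := exists_fullRank_factorization (A := S') rfl
  obtain ⟨D, hDB⟩ := exists_GL_mul_eq_of_mul_eq_one hL hL'
  obtain ⟨A, hCA⟩ := exists_mul_GL_eq_of_mul_eq_one hR' hR
  refine ⟨D, A, ?_⟩
  calc D.val * (B * C) = B' * (C' * A.val) := by rw [← Matrix.mul_assoc, hDB, hCA]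
    _ = S' * A.val := by rw [← Matrix.mul_assoc, ← hS']

lemma rank_mul_eq_card_of_mul_eq_one {l : Type*} [Fintype l] [DecidableEq l]
    {B : Matrix ι l K} {C : Matrix l κ K} {L : Matrix l ι K} {R : Matrix κ l K}
    (hL : L * B = 1) (hR : C * R = 1) :
    (B * C).rank = Fintype.card l := by
  apply le_antisymm ((rank_mul_le_left B C).trans B.rank_le_card_width)
  calc Fintype.card l = (L * (B * C) * R).rank := by
        rw [← Matrix.mul_assoc, hL, Matrix.one_mul, hR, rank_one]
    _ ≤ (L * (B * C)).rank := rank_mul_le_left _ _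
    _ ≤ (B * C).rank := rank_mul_le_right _ _

end MatrixRank

lemma exists_mul_eq_one_of_le (R : Type*) [Semiring R] {k p : ℕ} (h : k ≤ p) :
    ∃ (L : Matrix (Fin k) (Fin p) R) (B : Matrix (Fin p) (Fin k) R), L * B = 1 := by
  refine ⟨(1 : Matrix (Fin p) (Fin p) R).submatrix (Fin.castLE h) id,
    (1 : Matrix (Fin p) (Fin p) R).submatrix id (Fin.castLE h), ?_⟩
  rw [← submatrix_mul _ _ _ _ _ Function.bijective_id, Matrix.one_mul,
    submatrix_one _ (Fin.castLE_injective h)]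

section AddCharTrace

variable {K R ι κ : Type*} [Field K] [Fintype ι] [Fintype κ]

lemma eq_zero_of_forall_addChar_trace_mul_eq_one [CommMonoid R] {χ : AddChar K R} (hχ : χ ≠ 1)
    {X : Matrix κ ι K} (h : ∀ S : Matrix ι κ K, χ (S * X).trace = 1) : X = 0 := by
  classical
  rw [ext_iff_trace_mul_left]
  intro S
  by_contra hS
  rw [Matrix.mul_zero, trace_zero] at hS
  refine AddChar.IsPrimitive.of_ne_one hχ hS (DFunLike.ext _ _ fun c ↦ ?_)
  rw [AddChar.mulShift_apply, mul_comm, ← smul_eq_mul, ← trace_smul, ← Matrix.smul_mul, h,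
    AddChar.one_apply]

lemma sum_addChar_trace_mul_eq_zero [CommRing R] [IsDomain R] [Fintype (Matrix ι κ K)]
    {χ : AddChar K R} (hχ : χ ≠ 1) {X : Matrix κ ι K} (hX : X ≠ 0) :
    ∑ S : Matrix ι κ K, χ (S * X).trace = 0 := by
  let ψ : AddChar (Matrix ι κ K) R :=
    χ.compAddMonoidHom ((traceAddMonoidHom ι K).comp (addMonoidHomMulRight X))
  refine AddChar.sum_eq_zero_of_ne_one (ψ := ψ) fun hψ ↦ hX ?_
  exact eq_zero_of_forall_addChar_trace_mul_eq_one hχ fun S ↦ congr($hψ S)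

end AddCharTrace

section Subrepresentations

variable {k G W : Type*} [Field k] [Group G] [AddCommGroup W] [Module k W]
  {ρ : Representation k G W}

/-- The smallest subrepresentation of `ρ` containing `s`, obtained from the `k[G]`-span of `s`. -/
noncomputable def subrepresentationSpan (ρ : Representation k G W) (s : Set W) :
    Subrepresentation ρ :=
  .ofSubmodule' (Submodule.span (MonoidAlgebra k G) (s : Set ρ.asModule))

lemma subrepresentationSpan_le {s : Set W} {N : Subrepresentation ρ} :
    subrepresentationSpan ρ s ≤ N ↔ s ⊆ N :=
  Submodule.span_le (p := N.asSubmodule)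

/-- The common eigenspace of the operators `ρ (u i)`, with eigenvalue `c i` for `ρ (u i)`. -/
def jointEigenspace {ι : Type*} (ρ : Representation k G W) (u : ι → G) (c : ι → k) :
    Submodule k W :=
  ⨅ i, Module.End.eigenspace (ρ (u i)) (c i)

variable {ι : Type*} {u : ι → G} {c : ι → k}

lemma mem_jointEigenspace {w : W} : w ∈ jointEigenspace ρ u c ↔ ∀ i, ρ (u i) w = c i • w := by
  simp only [jointEigenspace, Submodule.mem_iInf, Module.End.mem_eigenspace_iff]

lemma mem_jointEigenspace_of_add_mem {p q : Subrepresentation ρ}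
    (hpq : Disjoint p.toSubmodule q.toSubmodule) {x y : W} (hx : x ∈ p.toSubmodule)
    (hy : y ∈ q.toSubmodule) (hxy : x + y ∈ jointEigenspace ρ u c) :
    x ∈ jointEigenspace ρ u c := by
  rw [mem_jointEigenspace] at hxy ⊢
  intro i
  have hsum : ρ (u i) x - c i • x = -(ρ (u i) y - c i • y) := by
    rw [eq_neg_iff_add_eq_zero, sub_add_sub_comm, ← map_add, ← smul_add, hxy i, sub_self]
  have hmem_p : ρ (u i) x - c i • x ∈ p.toSubmodule :=
    sub_mem (p.apply_mem_toSubmodule _ hx) (p.toSubmodule.smul_mem _ hx)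
  have hmem_q : ρ (u i) x - c i • x ∈ q.toSubmodule :=
    hsum ▸ neg_mem (sub_mem (q.apply_mem_toSubmodule _ hy) (q.toSubmodule.smul_mem _ hy))
  exact sub_eq_zero.1 (Submodule.disjoint_def.1 hpq _ hmem_p hmem_q)

lemma not_disjoint_jointEigenspace_or_of_isCompl (hE : jointEigenspace ρ u c ≠ ⊥)
    {p q : Subrepresentation ρ} (hpq : IsCompl p.toSubmodule q.toSubmodule) :
    ¬ Disjoint (jointEigenspace ρ u c) p.toSubmodule ∨
      ¬ Disjoint (jointEigenspace ρ u c) q.toSubmodule := by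
  by_contra! ⟨hp, hq⟩
  refine hE ((Submodule.eq_bot_iff _).2 fun v hv ↦ ?_)
  obtain ⟨x, y, hx, hy, rfl⟩ := Submodule.codisjoint_iff_exists_add_eq.1 hpq.codisjoint v
  rw [Submodule.disjoint_def.1 hp x (mem_jointEigenspace_of_add_mem hpq.disjoint hx hy hv) hx,
    Submodule.disjoint_def.1 hq y
      (mem_jointEigenspace_of_add_mem hpq.disjoint.symm hy hx (add_comm x y ▸ hv)) hy, add_zero]

lemma isCompl_toSubmodule {p q : Subrepresentation ρ} (h : IsCompl p q) :
    IsCompl p.toSubmodule q.toSubmodule :=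
  .of_eq congr(($(h.inf_eq_bot)).toSubmodule) congr(($(h.sup_eq_top)).toSubmodule)

lemma existsUnique_isAtom_not_disjoint_jointEigenspace
    [Representation.IsSemisimpleRepresentation ρ] (hE : jointEigenspace ρ u c ≠ ⊥)
    (hle : ∀ N : Subrepresentation ρ, ¬ Disjoint (jointEigenspace ρ u c) N.toSubmodule →
      jointEigenspace ρ u c ≤ N.toSubmodule) :
    ∃! N : Subrepresentation ρ,
      IsAtom N ∧ ¬ Disjoint (jointEigenspace ρ u c) N.toSubmodule := by
  set E := jointEigenspace ρ u c
  set N := subrepresentationSpan ρ (E : Set W)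
  have hEN : E ≤ N.toSubmodule := subrepresentationSpan_le.1 le_rfl
  have hN : ∀ p : Subrepresentation ρ, ¬ Disjoint E p.toSubmodule → N ≤ p :=
    fun p hp ↦ subrepresentationSpan_le.2 (hle p hp)
  have hEN_meet : ¬ Disjoint E N.toSubmodule := fun h ↦ hE (h.eq_bot_of_le hEN)
  have hN_atom : IsAtom N := by
    refine ⟨fun h ↦ hEN_meet (by rw [h]; exact disjoint_bot_right), fun p hp ↦ ?_⟩
    obtain ⟨q, hpq⟩ := exists_isCompl p
    obtain h | h := not_disjoint_jointEigenspace_or_of_isCompl hE (isCompl_toSubmodule hpq)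
    · exact absurd (hN p h) hp.not_ge
    · exact disjoint_self.1 (hpq.disjoint.mono_right (hp.le.trans (hN q h)))
  refine ⟨N, ⟨hN_atom, hEN_meet⟩, fun p ⟨hp_atom, hp⟩ ↦ ?_⟩
  exact ((hp_atom.le_iff_eq hN_atom.1).1 (hN p hp)).symm

end Subrepresentations

section Irreducible

variable {k G H W U : Type*} [Field k] [Group G] [Group H] [AddCommGroup W] [Module k W]
  [AddCommGroup U] [Module k U]

/-- The isomorphism `e` from a subspace `E` of the space of `ρ` onto the space of `σ` carries
`ρ (j h)` to `σ h`. Here `j` need not be a homomorphism, and only the elements `j h` are required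
to preserve `E`. -/
def IntertwinesAlong (j : H → G) (ρ : Representation k G W) (σ : Representation k H U)
    {E : Submodule k W} (e : E ≃ₗ[k] U) : Prop :=
  ∀ h (x : E), ∃ hx : ρ (j h) x ∈ E, e ⟨ρ (j h) x, hx⟩ = σ h (e x)

lemma IntertwinesAlong.le_of_not_disjoint {j : H → G} {ρ : Representation k G W}
    {σ : Representation k H U} [σ.IsIrreducible] {E : Submodule k W} {e : E ≃ₗ[k] U}
    (he : IntertwinesAlong j ρ σ e) (N : Subrepresentation ρ)
    (hN : ¬ Disjoint E N.toSubmodule) : E ≤ N.toSubmodule := by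
  let M : Subrepresentation σ :=
    ⟨(N.toSubmodule.comap E.subtype).map e.toLinearMap, fun h u hu ↦ by
      obtain ⟨x, hx, rfl⟩ := hu
      obtain ⟨hjx, heq⟩ := he h x
      exact ⟨⟨ρ (j h) x, hjx⟩, N.apply_mem_toSubmodule (j h) hx, heq⟩⟩
  have hM : M ≠ ⊥ := fun hbot ↦ hN <| Submodule.disjoint_def.2 fun x hxE hxN ↦ by
    have hex : e ⟨x, hxE⟩ ∈ M.toSubmodule := ⟨_, hxN, rfl⟩
    rw [hbot] at hex
    exact congrArg Subtype.val (e.map_eq_zero_iff.1 hex)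
  intro x hx
  have hex : e ⟨x, hx⟩ ∈ M.toSubmodule := by
    rw [(eq_bot_or_eq_top M).resolve_left hM]
    exact Submodule.mem_top
  obtain ⟨y, hy, hyx⟩ := hex
  exact (e.injective hyx ▸ hy : (⟨x, hx⟩ : E) ∈ N.toSubmodule.comap E.subtype)

lemma nontrivial_subrepresentation_iff {ρ : Representation k G W} :
    Nontrivial (Subrepresentation ρ) ↔ Nontrivial W := by
  refine ⟨fun _ ↦ ?_, fun _ ↦ ⟨⊥, ⊤, fun h ↦ ?_⟩⟩
  · have := (Subrepresentation.toSubmodule_injective (ρ := ρ)).nontrivial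
    exact (Submodule.nontrivial_iff k).1 this
  · exact bot_ne_top (α := Submodule k W) congr(($h).toSubmodule)

instance isIrreducible_dual [FiniteDimensional k W] (ρ : Representation k G W)
    [hρ : ρ.IsIrreducible] : ρ.dual.IsIrreducible where
  toNontrivial := by
    have : Nontrivial W := nontrivial_subrepresentation_iff.1 hρ.toNontrivial
    exact nontrivial_subrepresentation_iff.2 inferInstance
  eq_bot_or_eq_top P := by
    let A : Subrepresentation ρ := ⟨P.toSubmodule.dualCoannihilator, fun g v hv ↦ by
      rw [Submodule.mem_dualCoannihilator] at hv ⊢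
      intro φ hφ
      simpa [Module.Dual.transpose_apply] using hv _ (P.apply_mem_toSubmodule g⁻¹ hφ)⟩
    have hA : A.toSubmodule.dualAnnihilator = P.toSubmodule :=
      Subspace.dualCoannihilator_dualAnnihilator_eq
    obtain h | h := eq_bot_or_eq_top A
    · refine .inr (Subrepresentation.toSubmodule_injective ?_)
      rw [← hA, h]
      exact Submodule.dualAnnihilator_bot
    · refine .inl (Subrepresentation.toSubmodule_injective ?_)
      rw [← hA, h]
      exact Submodule.dualAnnihilator_top

end Irreducible

section IsIrred

variable {G W W' : Type} [Group G] [AddCommGroup W] [Module ℂ W] [AddCommGroup W'] [Module ℂ W']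

lemma isIrreducible_of_isIrred {ρ : Representation ℂ G W} (hρ : IsIrred ρ) :
    ρ.IsIrreducible where
  toNontrivial := nontrivial_subrepresentation_iff.2 ((nontrivial_iff_exists_ne 0).2 hρ.1)
  eq_bot_or_eq_top N :=
    (hρ.2 N.toSubmodule N.apply_mem_toSubmodule).imp
      (fun h ↦ Subrepresentation.toSubmodule_injective h)
      (fun h ↦ Subrepresentation.toSubmodule_injective h)

lemma isIrred_subRep_iff_isAtom {ρ : Representation ℂ G W} {N : Submodule ℂ W}
    {hN : ∀ g, ∀ v ∈ N, ρ g v ∈ N} :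
    IsIrred (subRep ρ N hN) ↔ IsAtom (⟨N, hN⟩ : Subrepresentation ρ) := by
  constructor
  · rintro ⟨⟨v, hv⟩, hirr⟩
    refine ⟨fun h ↦ hv (Subtype.ext ?_), fun p hp ↦ ?_⟩
    · have hvN : (v : W) ∈ (⟨N, hN⟩ : Subrepresentation ρ) := v.2
      rwa [h] at hvN
    · obtain h | h := hirr (p.toSubmodule.comap N.subtype) fun g _ hx ↦
        p.apply_mem_toSubmodule g hx
      · exact Subrepresentation.toSubmodule_injective
          ((Submodule.disjoint_iff_comap_eq_bot.2 h).symm.eq_bot_of_le hp.le)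
      · exact absurd (Submodule.comap_subtype_eq_top.1 h) hp.not_ge
  · rintro ⟨hbot, hatom⟩
    have hN_ne : N ≠ ⊥ := fun h ↦ hbot (Subrepresentation.toSubmodule_injective h)
    obtain ⟨v, hvN, hv⟩ := N.exists_mem_ne_zero_of_ne_bot hN_ne
    refine ⟨⟨⟨v, hvN⟩, fun h ↦ hv congr(($h : W))⟩, fun p hp ↦ or_iff_not_imp_right.2 fun h ↦ ?_⟩
    let P : Subrepresentation ρ := ⟨p.map N.subtype, by
      rintro g _ ⟨x, hx, rfl⟩
      exact ⟨_, hp g x hx, rfl⟩⟩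
    have hinj := Submodule.map_injective_of_injective N.injective_subtype
    have hP : P < ⟨N, hN⟩ := (Submodule.map_subtype_le N p).lt_of_ne
      fun hPN ↦ h (hinj (hPN.trans N.map_subtype_top.symm))
    exact hinj (congr(($(hatom P hP)).toSubmodule).trans (Submodule.map_bot _).symm)

lemma ne_bot_of_isIrred_subRep {ρ : Representation ℂ G W} {N : Submodule ℂ W}
    {hN : ∀ g, ∀ v ∈ N, ρ g v ∈ N} (h : IsIrred (subRep ρ N hN)) : N ≠ ⊥ :=
  Submodule.nontrivial_iff_ne_bot.1 ((nontrivial_iff_exists_ne 0).2 h.1)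

lemma repEquiv_of_repEquiv_dual [FiniteDimensional ℂ W] [FiniteDimensional ℂ W']
    {ρ : Representation ℂ G W} {ρ' : Representation ℂ G W'} (h : RepEquiv ρ.dual ρ'.dual) :
    RepEquiv ρ ρ' := by
  obtain ⟨e, he⟩ := h
  have he_symm : ∀ g φ, e.symm (ρ'.dual g φ) = ρ.dual g (e.symm φ) := fun g φ ↦ by
    rw [e.symm_apply_eq, he, e.apply_symm_apply]
  let T := (Module.evalEquiv ℂ W).trans (e.symm.dualMap.trans (Module.evalEquiv ℂ W').symm)
  have hT : ∀ (φ : Module.Dual ℂ W') v, φ (T v) = e.symm φ v := fun φ v ↦ by simp [T]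
  refine ⟨T, fun g v ↦ (Module.evalEquiv ℂ W').injective (LinearMap.ext fun φ ↦ ?_)⟩
  calc φ (T (ρ g v)) = ρ.dual g⁻¹ (e.symm φ) v := by
        rw [hT, Representation.dual_apply, inv_inv, Module.Dual.transpose_apply,
          LinearMap.comp_apply]
    _ = ρ'.dual g⁻¹ φ (T v) := by rw [hT, he_symm]
    _ = φ (ρ' g (T v)) := by
        rw [Representation.dual_apply, inv_inv, Module.Dual.transpose_apply,
          LinearMap.comp_apply]

end IsIrred

section CharEigenspace

variable {n a b : ℕ} {hab : a + b ≤ n}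

lemma uU_add (X Y : Matrix (Fin a) (Fin b) F) :
    uU n a b hab (X + Y) = uU n a b hab X * uU n a b hab Y := by
  have hadd : blockEmbed n a b (X + Y) = blockEmbed n a b X + blockEmbed n a b Y := by
    ext i j
    simp only [blockEmbed, of_apply, Matrix.add_apply]
    split_ifs <;> simp
  refine Units.ext ?_
  simp only [uU, hadd, Units.val_mul, Matrix.add_mul, Matrix.mul_add, Matrix.one_mul,
    Matrix.mul_one, blockEmbed_mul_blockEmbed hab]
  abel

lemma uU_zero : uU n a b hab (0 : Matrix (Fin a) (Fin b) F) = 1 := by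
  simpa using uU_add (hab := hab) (0 : Matrix (Fin a) (Fin b) F) 0

/-- The eigenspace of the character `γ_S` of `U_{a,b}` in `π`. -/
noncomputable def charEigenspace (χ₀ : AddChar F ℂ) (π : Representation ℂ (GL (Fin n) F) V)
    (hab : a + b ≤ n) (S : Matrix (Fin b) (Fin a) F) : Submodule ℂ V :=
  jointEigenspace π (uU n a b hab) fun X ↦ χ₀ (S * X).trace

variable {χ₀ : AddChar F ℂ} {π : Representation ℂ (GL (Fin n) F) V} {S : Matrix (Fin b) (Fin a) F}

lemma mem_charEigenspace {v : V} :
    v ∈ charEigenspace χ₀ π hab S ↔ ∀ X, π (uU n a b hab X) v = χ₀ (S * X).trace • v :=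
  mem_jointEigenspace

lemma charAppears_iff_charEigenspace_ne_bot :
    CharAppears χ₀ π hab S ↔ charEigenspace χ₀ π hab S ≠ ⊥ := by
  simp only [CharAppears, Submodule.ne_bot_iff, mem_charEigenspace, and_comm]

lemma charEigenspace_subRep {N : Submodule ℂ V} {hN : ∀ g, ∀ v ∈ N, π g v ∈ N} :
    charEigenspace χ₀ (subRep π N hN) hab S = (charEigenspace χ₀ π hab S).comap N.subtype := by
  ext x
  simp only [Submodule.mem_comap, mem_charEigenspace, Subtype.ext_iff]
  rfl

lemma charAppears_subRep_iff {N : Submodule ℂ V} {hN : ∀ g, ∀ v ∈ N, π g v ∈ N} :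
    CharAppears χ₀ (subRep π N hN) hab S ↔ ¬ Disjoint (charEigenspace χ₀ π hab S) N := by
  rw [charAppears_iff_charEigenspace_ne_bot, charEigenspace_subRep, Ne,
    ← Submodule.disjoint_iff_comap_eq_bot, disjoint_comm]

lemma CharAppears.of_subRep {N : Submodule ℂ V} {hN : ∀ g, ∀ v ∈ N, π g v ∈ N}
    (h : CharAppears χ₀ (subRep π N hN) hab S) : CharAppears χ₀ π hab S := by
  rw [charAppears_iff_charEigenspace_ne_bot]
  intro hbot
  exact charAppears_subRep_iff.1 h (hbot ▸ disjoint_bot_left)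

/-- The unnormalized projection of `v` to the eigenspace of `γ_S`. -/
noncomputable def charProjection (χ₀ : AddChar F ℂ) (π : Representation ℂ (GL (Fin n) F) V)
    (hab : a + b ≤ n) (S : Matrix (Fin b) (Fin a) F) (v : V) : V :=
  ∑ X : Matrix (Fin a) (Fin b) F, χ₀ (-(S * X).trace) • π (uU n a b hab X) v

lemma charProjection_mem_charEigenspace (v : V) :
    charProjection χ₀ π hab S v ∈ charEigenspace χ₀ π hab S := by
  refine mem_charEigenspace.2 fun Y ↦ ?_
  simp only [charProjection, map_sum, map_smul, Finset.smul_sum, smul_smul]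
  refine Fintype.sum_equiv (Equiv.addLeft Y) _ _ fun X ↦ ?_
  rw [Equiv.coe_addLeft, uU_add, map_mul, Module.End.mul_apply, ← AddChar.map_add_eq_mul,
    Matrix.mul_add, trace_add, neg_add, add_neg_cancel_left]

lemma sum_charProjection (hχ₀ : χ₀ ≠ 1) (v : V) :
    ∑ S, charProjection χ₀ π hab S v = (Fintype.card (Matrix (Fin b) (Fin a) F) : ℂ) • v := by
  have hsum : ∀ X : Matrix (Fin a) (Fin b) F,
      ∑ S : Matrix (Fin b) (Fin a) F, χ₀ (-(S * X).trace) =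
        if X = 0 then (Fintype.card (Matrix (Fin b) (Fin a) F) : ℂ) else 0 := fun X ↦ by
    split_ifs with hX
    · simp [hX]
    · simpa using sum_addChar_trace_mul_eq_zero hχ₀ (neg_ne_zero.2 hX)
  simp only [charProjection]
  rw [Finset.sum_comm]
  simp only [← Finset.sum_smul, hsum, ite_smul, zero_smul, Finset.sum_ite_eq', Finset.mem_univ,
    if_true, uU_zero, map_one, Module.End.one_apply]

lemma exists_charAppears [Nontrivial V] (hχ₀ : χ₀ ≠ 1) (π : Representation ℂ (GL (Fin n) F) V)
    (hab : a + b ≤ n) : ∃ S, CharAppears χ₀ π hab S := by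
  by_contra! h
  simp only [charAppears_iff_charEigenspace_ne_bot, not_not] at h
  obtain ⟨v, hv⟩ := exists_ne (0 : V)
  have hzero : ∀ S, charProjection χ₀ π hab S v = 0 := fun S ↦ by
    simpa [h S] using charProjection_mem_charEigenspace (χ₀ := χ₀) (π := π) (hab := hab) (S := S) v
  have hcard : (Fintype.card (Matrix (Fin b) (Fin a) F) : ℂ) • v ≠ 0 :=
    smul_ne_zero (Nat.cast_ne_zero.2 Fintype.card_ne_zero) hv
  rw [← sum_charProjection (π := π) (hab := hab) hχ₀ v] at hcard
  exact hcard (Finset.sum_eq_zero fun S _ ↦ hzero S)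

lemma exists_hasRankAB [Nontrivial V] (hχ₀ : χ₀ ≠ 1) (π : Representation ℂ (GL (Fin n) F) V)
    (hab : a + b ≤ n) : ∃ k, HasRankAB χ₀ π hab k := by
  obtain ⟨S, hS, hmax⟩ := Set.exists_max_image {S | CharAppears χ₀ π hab S} Matrix.rank
    (Set.toFinite _) (exists_charAppears hχ₀ π hab)
  exact ⟨S.rank, ⟨S, hS, rfl⟩, hmax⟩

end CharEigenspace

section BlockMatrices

variable {R : Type*} {a b k : ℕ}

/-- The `(a + b) × k` matrix with top `a` rows `T₁` and bottom `b` rows `T₂`. -/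
def stackRows (T₁ : Matrix (Fin a) (Fin k) R) (T₂ : Matrix (Fin b) (Fin k) R) :
    Matrix (Fin (a + b)) (Fin k) R :=
  (fromRows T₁ T₂).submatrix finSumFinEquiv.symm id

/-- The top `a` rows of an `(a + b) × k` matrix. -/
def topRows (T : Matrix (Fin (a + b)) (Fin k) R) : Matrix (Fin a) (Fin k) R :=
  T.submatrix (Fin.castAdd b) id

/-- The bottom `b` rows of an `(a + b) × k` matrix. -/
def bottomRows (T : Matrix (Fin (a + b)) (Fin k) R) : Matrix (Fin b) (Fin k) R :=
  T.submatrix (Fin.natAdd a) id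

/-- The `(a + b) × (a + b)` matrix with the given blocks. -/
def stackBlocks (A : Matrix (Fin a) (Fin a) R) (X : Matrix (Fin a) (Fin b) R)
    (Y : Matrix (Fin b) (Fin a) R) (D : Matrix (Fin b) (Fin b) R) :
    Matrix (Fin (a + b)) (Fin (a + b)) R :=
  (fromBlocks A X Y D).submatrix finSumFinEquiv.symm finSumFinEquiv.symm

@[simp]
lemma topRows_stackRows (T₁ : Matrix (Fin a) (Fin k) R) (T₂ : Matrix (Fin b) (Fin k) R) :
    topRows (stackRows T₁ T₂) = T₁ := by
  ext i j
  simp [topRows, stackRows]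

@[simp]
lemma bottomRows_stackRows (T₁ : Matrix (Fin a) (Fin k) R) (T₂ : Matrix (Fin b) (Fin k) R) :
    bottomRows (stackRows T₁ T₂) = T₂ := by
  ext i j
  simp [bottomRows, stackRows]

lemma stackRows_topRows_bottomRows (T : Matrix (Fin (a + b)) (Fin k) R) :
    stackRows (topRows T) (bottomRows T) = T := by
  ext i j
  obtain ⟨i | i, rfl⟩ := finSumFinEquiv.surjective i <;> simp [topRows, bottomRows, stackRows]

section Semiring

variable [Semiring R]

lemma stackRows_mul {l : ℕ} (T₁ : Matrix (Fin a) (Fin k) R) (T₂ : Matrix (Fin b) (Fin k) R)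
    (m : Matrix (Fin k) (Fin l) R) : stackRows T₁ T₂ * m = stackRows (T₁ * m) (T₂ * m) := by
  rw [stackRows, stackRows, ← fromRows_mul, submatrix_mul _ _ _ id _ Function.bijective_id,
    submatrix_id_id]

lemma stackBlocks_mul_stackRows (A : Matrix (Fin a) (Fin a) R) (X : Matrix (Fin a) (Fin b) R)
    (Y : Matrix (Fin b) (Fin a) R) (D : Matrix (Fin b) (Fin b) R)
    (T₁ : Matrix (Fin a) (Fin k) R) (T₂ : Matrix (Fin b) (Fin k) R) :
    stackBlocks A X Y D * stackRows T₁ T₂ = stackRows (A * T₁ + X * T₂) (Y * T₁ + D * T₂) := by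
  rw [stackBlocks, stackRows, submatrix_mul_equiv, fromBlocks_mul_fromRows, stackRows]

lemma stackBlocks_mul_stackBlocks (A A' : Matrix (Fin a) (Fin a) R)
    (X X' : Matrix (Fin a) (Fin b) R) (Y Y' : Matrix (Fin b) (Fin a) R)
    (D D' : Matrix (Fin b) (Fin b) R) :
    stackBlocks A X Y D * stackBlocks A' X' Y' D' =
      stackBlocks (A * A' + X * Y') (A * X' + X * D') (Y * A' + D * Y') (Y * X' + D * D') := by
  simp only [stackBlocks, submatrix_mul_equiv, fromBlocks_multiply]

lemma stackBlocks_one :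
    stackBlocks (1 : Matrix (Fin a) (Fin a) R) 0 0 (1 : Matrix (Fin b) (Fin b) R) = 1 := by
  rw [stackBlocks, fromBlocks_one, submatrix_one_equiv]

end Semiring

end BlockMatrices

section Levi

variable {K : Type} [Field K] {a b k : ℕ}

/-- The block diagonal element `diag(A, D)` of the Levi subgroup `GL_a × GL_b` of `GL_{a+b}`. -/
def levi (A : GL (Fin a) K) (D : GL (Fin b) K) : GL (Fin (a + b)) K where
  val := stackBlocks A.val 0 0 D.val
  inv := stackBlocks A⁻¹.val 0 0 D⁻¹.val
  val_inv := by simp [stackBlocks_mul_stackBlocks, stackBlocks_one]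
  inv_val := by simp [stackBlocks_mul_stackBlocks, stackBlocks_one]

lemma coe_levi (A : GL (Fin a) K) (D : GL (Fin b) K) :
    (levi A D).val = stackBlocks A.val 0 0 D.val := rfl

lemma coe_levi_inv (A : GL (Fin a) K) (D : GL (Fin b) K) :
    (levi A D)⁻¹.val = stackBlocks A⁻¹.val 0 0 D⁻¹.val := rfl

lemma lambdaRep_apply {n : ℕ} (g : GL (Fin n) K) (f : Matrix (Fin n) (Fin k) K → ℂ)
    (T : Matrix (Fin n) (Fin k) K) : lambdaRep n k g f T = f (g⁻¹.val * T) :=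
  congrArg f (Matrix.mul_one _)

lemma rRep_apply {n : ℕ} (h : GL (Fin k) K) (f : Matrix (Fin n) (Fin k) K → ℂ)
    (T : Matrix (Fin n) (Fin k) K) : rRep n k h f T = f (T * h.val) := by
  change f ((1⁻¹ : GL (Fin n) K).val * T * h.val) = f (T * h.val)
  rw [inv_one, Units.val_one, Matrix.one_mul]

lemma lambdaRep_levi_apply (A : GL (Fin a) K) (D : GL (Fin b) K)
    (f : Matrix (Fin (a + b)) (Fin k) K → ℂ) (T₁ : Matrix (Fin a) (Fin k) K)
    (T₂ : Matrix (Fin b) (Fin k) K) : lambdaRep (a + b) k (levi A D) f (stackRows T₁ T₂) =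
      f (stackRows (A⁻¹.val * T₁) (D⁻¹.val * T₂)) := by
  rw [lambdaRep_apply, coe_levi_inv, stackBlocks_mul_stackRows, Matrix.zero_mul, Matrix.zero_mul,
    add_zero, zero_add]

variable {hab : a + b ≤ a + b}

lemma coe_uU (X : Matrix (Fin a) (Fin b) F) : (uU (a + b) a b hab X).val = stackBlocks 1 X 0 1 := by
  ext i j
  obtain ⟨i | i, rfl⟩ := finSumFinEquiv.surjective i <;>
  obtain ⟨j | j, rfl⟩ := finSumFinEquiv.surjective j <;>
  simp [uU, blockEmbed, stackBlocks, Matrix.one_apply, Fin.ext_iff] <;> omega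

lemma uU_inv (X : Matrix (Fin a) (Fin b) F) : (uU (a + b) a b hab X)⁻¹ = uU (a + b) a b hab (-X) :=
  inv_eq_of_mul_eq_one_right (by rw [← uU_add, add_neg_cancel, uU_zero])

lemma lambdaRep_uU_apply (X : Matrix (Fin a) (Fin b) F)
    (f : Matrix (Fin (a + b)) (Fin k) F → ℂ) (T₁ : Matrix (Fin a) (Fin k) F)
    (T₂ : Matrix (Fin b) (Fin k) F) :
    lambdaRep (a + b) k (uU (a + b) a b hab X) f (stackRows T₁ T₂) =
      f (stackRows (T₁ - X * T₂) T₂) := by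
  rw [lambdaRep_apply, uU_inv, coe_uU, stackBlocks_mul_stackRows, Matrix.one_mul, Matrix.one_mul,
    Matrix.zero_mul, zero_add, Matrix.neg_mul, sub_eq_add_neg]

lemma uU_mul_levi (X : Matrix (Fin a) (Fin b) F) (A : GL (Fin a) F) (D : GL (Fin b) F) :
    uU (a + b) a b hab X * levi A D = levi A D * uU (a + b) a b hab (A⁻¹.val * X * D.val) := by
  refine Units.ext ?_
  simp only [Units.val_mul, coe_uU, coe_levi, stackBlocks_mul_stackBlocks]
  congr 1
  all_goals simp [← Matrix.mul_assoc]

variable {χ₀ : AddChar F ℂ} {π : Representation ℂ (GL (Fin (a + b)) F) V}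
  {S S' : Matrix (Fin b) (Fin a) F}

lemma levi_apply_mem_charEigenspace {A : GL (Fin a) F} {D : GL (Fin b) F}
    (hS : D.val * S = S' * A.val) {v : V} (hv : v ∈ charEigenspace χ₀ π hab S) :
    π (levi A D) v ∈ charEigenspace χ₀ π hab S' := by
  refine mem_charEigenspace.2 fun X ↦ ?_
  have htrace : (S * (A⁻¹.val * X * D.val)).trace = (S' * X).trace :=
    calc (S * (A⁻¹.val * X * D.val)).trace = (D.val * S * (A⁻¹.val * X)).trace := by
          rw [← Matrix.mul_assoc, trace_mul_comm, ← Matrix.mul_assoc]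
      _ = (S' * (A.val * A⁻¹.val) * X).trace := by rw [hS]; simp only [Matrix.mul_assoc]
      _ = (S' * X).trace := by rw [Units.mul_inv, Matrix.mul_one]
  rw [← Module.End.mul_apply, ← map_mul, uU_mul_levi, map_mul, Module.End.mul_apply,
    mem_charEigenspace.1 hv, map_smul, htrace]

lemma CharAppears.of_rank_eq (hS : CharAppears χ₀ π hab S) (h : S.rank = S'.rank) :
    CharAppears χ₀ π hab S' := by
  obtain ⟨D, A, hDA⟩ := exists_GL_mul_eq_mul_GL_of_rank_eq h
  obtain ⟨v, hv_ne, hv⟩ := hS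
  refine ⟨π (levi A D) v, fun h0 ↦ hv_ne ?_, mem_charEigenspace.1
    (levi_apply_mem_charEigenspace hDA (mem_charEigenspace.2 hv))⟩
  simpa using congrArg (π (levi A D)⁻¹) h0

end Levi

section BasicEigenfunction

variable {K : Type*} [Field K] [DecidableEq K] {a b k : ℕ}

/-- The eigenfunction of `U_{a,b}` with character `γ_{BC}` supported on the matrices with bottom
rows `B`, normalized to have value `1` at `stackRows 0 B`. -/
noncomputable def basicEigenfunction (χ₀ : AddChar K ℂ) (B : Matrix (Fin b) (Fin k) K)
    (C : Matrix (Fin k) (Fin a) K) (T : Matrix (Fin (a + b)) (Fin k) K) : ℂ :=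
  if bottomRows T = B then χ₀ (-(C * topRows T).trace) else 0

lemma basicEigenfunction_stackRows_zero_mul {χ₀ : AddChar K ℂ} {B : Matrix (Fin b) (Fin k) K}
    {C : Matrix (Fin k) (Fin a) K} {L : Matrix (Fin k) (Fin b) K} (hL : L * B = 1)
    (m : Matrix (Fin k) (Fin k) K) :
    basicEigenfunction χ₀ B C (stackRows 0 B * m) = if m = 1 then 1 else 0 := by
  have hm : B * m = B ↔ m = 1 :=
    ⟨fun h ↦ by rw [← Matrix.one_mul m, ← hL, Matrix.mul_assoc, h],
      fun h ↦ by rw [h, Matrix.mul_one]⟩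
  simp [basicEigenfunction, stackRows_mul, hm]

end BasicEigenfunction

section Eigenfunctions

variable {a b k : ℕ} {hab : a + b ≤ a + b} {χ₀ : AddChar F ℂ}

lemma apply_stackRows_sub_mul {S : Matrix (Fin b) (Fin a) F}
    {f : Matrix (Fin (a + b)) (Fin k) F → ℂ}
    (hf : f ∈ charEigenspace χ₀ (lambdaRep (a + b) k) hab S) (X : Matrix (Fin a) (Fin b) F)
    (T₁ : Matrix (Fin a) (Fin k) F) (T₂ : Matrix (Fin b) (Fin k) F) :
    f (stackRows (T₁ - X * T₂) T₂) = χ₀ (S * X).trace * f (stackRows T₁ T₂) := by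
  rw [← lambdaRep_uU_apply (hab := hab) X f T₁ T₂, mem_charEigenspace.1 hf, Pi.smul_apply,
    smul_eq_mul]

lemma exists_eq_mul_of_apply_stackRows_ne_zero (hχ₀ : χ₀ ≠ 1) {S : Matrix (Fin b) (Fin a) F}
    {f : Matrix (Fin (a + b)) (Fin k) F → ℂ}
    (hf : f ∈ charEigenspace χ₀ (lambdaRep (a + b) k) hab S)
    {T₁ : Matrix (Fin a) (Fin k) F} {T₂ : Matrix (Fin b) (Fin k) F}
    (hT : f (stackRows T₁ T₂) ≠ 0) : ∃ C : Matrix (Fin k) (Fin a) F, S = T₂ * C := by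
  obtain ⟨G, hG⟩ := exists_mul_mul_eq_self T₂
  refine ⟨G * S, ?_⟩
  -- `γ_S` is trivial on the matrices `Y * (1 - T₂ * G)`, since these annihilate `T₂`.
  suffices h : (1 - T₂ * G) * S = 0 by
    rwa [Matrix.sub_mul, Matrix.one_mul, sub_eq_zero, Matrix.mul_assoc] at h
  refine eq_zero_of_forall_addChar_trace_mul_eq_one hχ₀ fun Y ↦ ?_
  have hX : Y * (1 - T₂ * G) * T₂ = 0 := by
    rw [Matrix.mul_assoc, Matrix.sub_mul, hG, Matrix.one_mul, sub_self, Matrix.mul_zero]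
  have hfix := apply_stackRows_sub_mul hf (Y * (1 - T₂ * G)) T₁ T₂
  rw [hX, sub_zero, eq_comm, mul_eq_right₀ hT, trace_mul_comm] at hfix
  rwa [← Matrix.mul_assoc]

lemma rank_le_of_charAppears_lambdaRep (hχ₀ : χ₀ ≠ 1) {S : Matrix (Fin b) (Fin a) F}
    (hS : CharAppears χ₀ (lambdaRep (a + b) k) hab S) : S.rank ≤ k := by
  obtain ⟨f, hf_ne, hf⟩ := hS
  obtain ⟨T, hT⟩ := Function.ne_iff.1 hf_ne
  rw [← stackRows_topRows_bottomRows T] at hT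
  obtain ⟨C, rfl⟩ := exists_eq_mul_of_apply_stackRows_ne_zero hχ₀ (mem_charEigenspace.2 hf) hT
  calc (bottomRows T * C).rank ≤ C.rank := rank_mul_le_right _ _
    _ ≤ k := C.rank_le_height

variable {B : Matrix (Fin b) (Fin k) F} {C : Matrix (Fin k) (Fin a) F}
  {L : Matrix (Fin k) (Fin b) F} {R : Matrix (Fin a) (Fin k) F}

lemma exists_GL_eq_mul_of_apply_stackRows_ne_zero (hχ₀ : χ₀ ≠ 1) (hL : L * B = 1) (hR : C * R = 1)
    {f : Matrix (Fin (a + b)) (Fin k) F → ℂ}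
    (hf : f ∈ charEigenspace χ₀ (lambdaRep (a + b) k) hab (B * C))
    {T₁ : Matrix (Fin a) (Fin k) F} {T₂ : Matrix (Fin b) (Fin k) F}
    (hT : f (stackRows T₁ T₂) ≠ 0) : ∃ m : GL (Fin k) F, T₂ = B * m.val := by
  obtain ⟨C', hC'⟩ := exists_eq_mul_of_apply_stackRows_ne_zero hχ₀ hf hT
  have hB : B = T₂ * (C' * R) := by
    rw [← Matrix.mul_assoc, ← hC', Matrix.mul_assoc, hR, Matrix.mul_one]
  have hinv : L * T₂ * (C' * R) = 1 := by rw [Matrix.mul_assoc, ← hB, hL]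
  refine ⟨⟨L * T₂, C' * R, hinv, mul_eq_one_comm.1 hinv⟩, ?_⟩
  calc T₂ = T₂ * ((C' * R) * (L * T₂)) := by rw [mul_eq_one_comm.1 hinv, Matrix.mul_one]
    _ = B * (L * T₂) := by rw [← Matrix.mul_assoc, ← hB]

lemma exists_apply_stackRows_zero_mul_ne_zero (hχ₀ : χ₀ ≠ 1) (hL : L * B = 1) (hR : C * R = 1)
    {f : Matrix (Fin (a + b)) (Fin k) F → ℂ}
    (hf : f ∈ charEigenspace χ₀ (lambdaRep (a + b) k) hab (B * C)) (hf_ne : f ≠ 0) :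
    ∃ m : GL (Fin k) F, f (stackRows 0 B * m.val) ≠ 0 := by
  obtain ⟨T, hT⟩ := Function.ne_iff.1 hf_ne
  rw [← stackRows_topRows_bottomRows T] at hT
  obtain ⟨m, hm⟩ := exists_GL_eq_mul_of_apply_stackRows_ne_zero hχ₀ hL hR hf hT
  rw [hm] at hT
  have hX : topRows T * m⁻¹.val * L * (B * m.val) = topRows T :=
    calc topRows T * m⁻¹.val * L * (B * m.val)
        = topRows T * m⁻¹.val * (L * B) * m.val := by simp only [Matrix.mul_assoc]
      _ = topRows T := by
          rw [hL, Matrix.mul_one, Matrix.mul_assoc, Units.inv_mul, Matrix.mul_one]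
  refine ⟨m, ?_⟩
  rw [stackRows_mul, Matrix.zero_mul, ← sub_self (topRows T)]
  nth_rw 2 [← hX]
  rw [apply_stackRows_sub_mul hf]
  exact mul_ne_zero (χ₀.val_isUnit _).ne_zero hT

lemma basicEigenfunction_mem_charEigenspace :
    basicEigenfunction χ₀ B C ∈ charEigenspace χ₀ (lambdaRep (a + b) k) hab (B * C) := by
  refine mem_charEigenspace.2 fun X ↦ funext fun T ↦ ?_
  rw [← stackRows_topRows_bottomRows T, lambdaRep_uU_apply, Pi.smul_apply, smul_eq_mul]
  simp only [basicEigenfunction, topRows_stackRows, bottomRows_stackRows]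
  split_ifs with hB
  · have htrace : (C * (X * B)).trace = (B * C * X).trace := by
      rw [← Matrix.mul_assoc, trace_mul_comm, Matrix.mul_assoc]
    rw [hB, ← AddChar.map_add_eq_mul, Matrix.mul_sub, trace_sub, htrace, neg_sub, sub_eq_add_neg]
  · rw [mul_zero]

lemma hasRankAB_lambdaRep (hχ₀ : χ₀ ≠ 1) (hka : k ≤ a) (hkb : k ≤ b) :
    HasRankAB χ₀ (lambdaRep (F := F) (a + b) k) hab k := by
  obtain ⟨L, B, hL⟩ := exists_mul_eq_one_of_le F hkb
  obtain ⟨C, R, hR⟩ := exists_mul_eq_one_of_le F hka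
  refine ⟨⟨B * C, ⟨basicEigenfunction χ₀ B C, fun h ↦ ?_,
    mem_charEigenspace.1 basicEigenfunction_mem_charEigenspace⟩, ?_⟩,
    fun S ↦ rank_le_of_charAppears_lambdaRep hχ₀⟩
  · simpa [h] using basicEigenfunction_stackRows_zero_mul (χ₀ := χ₀) (C := C) hL 1
  · rw [rank_mul_eq_card_of_mul_eq_one hL hR, Fintype.card_fin]

end Eigenfunctions

section Intertwiners

variable {H W M : Type} [Group H] [AddCommGroup W] [Module ℂ W] [AddCommGroup M] [Module ℂ M]

/-- The sum over `H` of the conjugates of the rank one operator `v ↦ l v • w`; up to the scalar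
`|H|`, the projection of this operator to the intertwining operators from `ν` to `σ`. -/
noncomputable def averagedIntertwiner [Fintype H] (ν : Representation ℂ H W)
    (σ : Representation ℂ H M) (l : Module.Dual ℂ W) (w : M) : interSub ν σ :=
  ⟨∑ h, (l ∘ₗ ν h).smulRight (σ h⁻¹ w), fun g v ↦ by
    simp only [LinearMap.sum_apply, LinearMap.smulRight_apply, LinearMap.comp_apply, map_sum,
      map_smul]
    refine Fintype.sum_equiv (Equiv.mulRight g) _ _ fun h ↦ ?_
    rw [Equiv.coe_mulRight, map_mul, Module.End.mul_apply, ← Module.End.mul_apply (σ g), ← map_mul,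
      _root_.mul_inv_rev, mul_inv_cancel_left]⟩

lemma averagedIntertwiner_apply [Fintype H] (ν : Representation ℂ H W) (σ : Representation ℂ H M)
    (l : Module.Dual ℂ W) (w : M) (v : W) :
    (averagedIntertwiner ν σ l w).1 v = ∑ h, l (ν h v) • σ h⁻¹ w := by
  simp [averagedIntertwiner]

end Intertwiners

section InterEval

variable {K : Type} [Field K] {n k : ℕ} {Vν : Type} [AddCommGroup Vν] [Module ℂ Vν]
  {ν : Representation ℂ (GL (Fin k) K) Vν}

/-- Evaluation at the matrix `T` of an intertwining operator from `ν` to the functions on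
`M_{n,k}`, as a functional on the space of `ν`. -/
noncomputable def interEval (T : Matrix (Fin n) (Fin k) K) :
    interSub ν (rRep n k) →ₗ[ℂ] Module.Dual ℂ Vν :=
  (LinearMap.proj T).compRight ℂ ∘ₗ (interSub ν (rRep n k)).subtype

lemma interEval_apply (T : Matrix (Fin n) (Fin k) K) (φ : interSub ν (rRep n k)) (v : Vν) :
    interEval T φ v = φ.1 v T := rfl

lemma interEval_apply_apply (T : Matrix (Fin n) (Fin k) K) (φ : interSub ν (rRep n k))
    (m : GL (Fin k) K) (v : Vν) : interEval T φ (ν m v) = φ.1 v (T * m.val) := by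
  rw [interEval_apply, φ.2, rRep_apply]

end InterEval

section Xi

variable {k : ℕ} {Vν : Type} [AddCommGroup Vν] [Module ℂ Vν]
  {ν : Representation ℂ (GL (Fin k) F) Vν}

/-- The eigenspace of the character `γ_S` of `U_{a,b}` in `Ξ_ν`. -/
noncomputable abbrev xiEigenspace {n a b : ℕ} (χ₀ : AddChar F ℂ)
    (ν : Representation ℂ (GL (Fin k) F) Vν) (hab : a + b ≤ n) (S : Matrix (Fin b) (Fin a) F) :
    Submodule ℂ (interSub ν (rRep n k)) :=
  charEigenspace (V := interSub ν (rRep n k)) χ₀ (XiRep n k ν) hab S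

lemma mem_xiEigenspace {n a b : ℕ} {hab : a + b ≤ n} {χ₀ : AddChar F ℂ}
    {S : Matrix (Fin b) (Fin a) F} {φ : interSub ν (rRep n k)} :
    φ ∈ xiEigenspace χ₀ ν hab S ↔
      ∀ v, φ.1 v ∈ charEigenspace χ₀ (lambdaRep n k) hab S := by
  simp only [mem_charEigenspace, Subtype.ext_iff, LinearMap.ext_iff]
  exact forall_comm

lemma CharAppears.of_XiRep {n a b : ℕ} {hab : a + b ≤ n} {χ₀ : AddChar F ℂ}
    {S : Matrix (Fin b) (Fin a) F}
    (h : CharAppears (V := interSub ν (rRep n k)) χ₀ (XiRep n k ν) hab S) :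
    CharAppears χ₀ (lambdaRep n k) hab S := by
  obtain ⟨φ, hφ_ne, hφ⟩ := h
  obtain ⟨v, hv⟩ : ∃ v, φ.1 v ≠ 0 := by
    by_contra! h0
    exact hφ_ne (Subtype.ext (LinearMap.ext h0))
  exact ⟨φ.1 v, hv, mem_charEigenspace.1 (mem_xiEigenspace.1 (mem_charEigenspace.2 hφ) v)⟩

variable {a b : ℕ} {hab : a + b ≤ a + b} {χ₀ : AddChar F ℂ} {B : Matrix (Fin b) (Fin k) F}
  {C : Matrix (Fin k) (Fin a) F} {L : Matrix (Fin k) (Fin b) F} {R : Matrix (Fin a) (Fin k) F}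

lemma injective_interEval_domRestrict (hχ₀ : χ₀ ≠ 1) (hL : L * B = 1) (hR : C * R = 1) :
    Function.Injective ((interEval (ν := ν) (stackRows 0 B)).domRestrict
      (xiEigenspace χ₀ ν hab (B * C))) := by
  rintro ⟨φ, hφ⟩ ⟨ψ, hψ⟩ heval
  refine Subtype.ext (Subtype.ext (LinearMap.ext fun v ↦ ?_))
  by_contra hv
  obtain ⟨m, hm⟩ := exists_apply_stackRows_zero_mul_ne_zero hχ₀ hL hR
    (sub_mem (mem_xiEigenspace.1 hφ v) (mem_xiEigenspace.1 hψ v)) (sub_ne_zero.2 hv)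
  rw [Pi.sub_apply, ← interEval_apply_apply, ← interEval_apply_apply, sub_ne_zero] at hm
  exact hm congr($heval (ν m v))

lemma surjective_interEval_domRestrict (hL : L * B = 1) :
    Function.Surjective ((interEval (ν := ν) (stackRows 0 B)).domRestrict
      (xiEigenspace χ₀ ν hab (B * C))) := by
  intro l
  refine ⟨⟨averagedIntertwiner ν (rRep (a + b) k) l (basicEigenfunction χ₀ B C),
    mem_xiEigenspace.2 fun v ↦ ?_⟩, LinearMap.ext fun v ↦ ?_⟩
  · rw [averagedIntertwiner_apply]
    refine Submodule.sum_smul_mem _ _ fun m _ ↦ mem_charEigenspace.2 fun X ↦ ?_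
    rw [← Module.End.mul_apply, lambda_r_comm, Module.End.mul_apply,
      mem_charEigenspace.1 basicEigenfunction_mem_charEigenspace, map_smul]
  · have hterm : ∀ m : GL (Fin k) F, rRep (a + b) k m⁻¹ (basicEigenfunction χ₀ B C)
        (stackRows 0 B) = if m = 1 then 1 else 0 := by
      intro m
      rw [rRep_apply, basicEigenfunction_stackRows_zero_mul hL]
      simp only [Units.val_eq_one, inv_eq_one]
    rw [LinearMap.domRestrict_apply, interEval_apply, averagedIntertwiner_apply, Finset.sum_apply]
    simp [hterm]

/-- Evaluation at `stackRows 0 B` identifies the eigenspace of `γ_{BC}` in `Ξ_ν` with the dual of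
`ν`, when `B` has a left inverse and `C` a right inverse. -/
noncomputable def xiEigenspaceEquiv (hχ₀ : χ₀ ≠ 1) (hL : L * B = 1) (hR : C * R = 1) :
    xiEigenspace χ₀ ν hab (B * C) ≃ₗ[ℂ] Module.Dual ℂ Vν :=
  .ofBijective _
    ⟨injective_interEval_domRestrict hχ₀ hL hR, surjective_interEval_domRestrict hL⟩

lemma interEval_levi {A : GL (Fin a) F} {D : GL (Fin b) F} {m : GL (Fin k) F}
    (hD : D.val * B = B * m.val) (φ : interSub ν (rRep (a + b) k)) :
    interEval (stackRows 0 B) (XiRep (a + b) k ν (levi A D) φ) =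
      ν.dual m (interEval (stackRows 0 B) φ) := by
  have hDinv : D⁻¹.val * B = B * m⁻¹.val :=
    calc D⁻¹.val * B = D⁻¹.val * (B * m.val) * m⁻¹.val := by
          rw [Matrix.mul_assoc, Matrix.mul_assoc, Units.mul_inv, Matrix.mul_one]
      _ = B * m⁻¹.val := by rw [← hD, ← Matrix.mul_assoc, Units.inv_mul, Matrix.one_mul]
  ext v
  calc interEval (stackRows 0 B) (XiRep (a + b) k ν (levi A D) φ) v
      = lambdaRep (a + b) k (levi A D) (φ.1 v) (stackRows 0 B) := rfl
    _ = φ.1 v (stackRows 0 B * m⁻¹.val) := by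
        rw [lambdaRep_levi_apply, Matrix.mul_zero, hDinv, stackRows_mul, Matrix.zero_mul]
    _ = ν.dual m (interEval (stackRows 0 B) φ) v := (interEval_apply_apply _ _ _ _).symm

lemma exists_intertwinesAlong_xiEigenspaceEquiv (hχ₀ : χ₀ ≠ 1) (hL : L * B = 1)
    (hR : C * R = 1) (hab : a + b ≤ a + b) : ∃ j : GL (Fin k) F → GL (Fin (a + b)) F,
    ∀ {Vν : Type} [AddCommGroup Vν] [Module ℂ Vν] (ν : Representation ℂ (GL (Fin k) F) Vν),
      IntertwinesAlong (W := interSub ν (rRep (a + b) k)) j (XiRep (a + b) k ν) ν.dual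
        (xiEigenspaceEquiv (hab := hab) hχ₀ hL hR) := by
  suffices h : ∀ m : GL (Fin k) F, ∃ (A : GL (Fin a) F) (D : GL (Fin b) F),
      D.val * B = B * m.val ∧ D.val * (B * C) = B * C * A.val by
    choose A D hD hS using h
    exact ⟨fun m ↦ levi (A m) (D m), fun ν m φ ↦
      ⟨levi_apply_mem_charEigenspace (hS m) φ.2, interEval_levi (hD m) φ.1⟩⟩
  intro m
  have hL' : m⁻¹.val * L * (B * m.val) = 1 :=
    calc m⁻¹.val * L * (B * m.val) = m⁻¹.val * (L * B) * m.val := by simp only [Matrix.mul_assoc]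
      _ = 1 := by rw [hL, Matrix.mul_one, Units.inv_mul]
  have hR' : m.val * C * (R * m⁻¹.val) = 1 :=
    calc m.val * C * (R * m⁻¹.val) = m.val * (C * R) * m⁻¹.val := by simp only [Matrix.mul_assoc]
      _ = 1 := by rw [hR, Matrix.mul_one, Units.mul_inv]
  obtain ⟨D, hD⟩ := exists_GL_mul_eq_of_mul_eq_one hL hL'
  obtain ⟨A, hA⟩ := exists_mul_GL_eq_of_mul_eq_one hR hR'
  have hS : D.val * (B * C) = B * C * A.val := by
    rw [← Matrix.mul_assoc, hD, Matrix.mul_assoc, Matrix.mul_assoc, hA]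
  exact ⟨A, D, hD, hS⟩

end Xi

section EigenspaceEquiv

variable {n a b : ℕ} {hab : a + b ≤ n} {χ₀ : AddChar F ℂ} {S : Matrix (Fin b) (Fin a) F}
  {V' : Type} [AddCommGroup V'] [Module ℂ V'] {π : Representation ℂ (GL (Fin n) F) V}
  {π' : Representation ℂ (GL (Fin n) F) V'}

lemma exists_charEigenspace_equiv_of_repEquiv_subRep {N : Submodule ℂ V}
    {hN : ∀ g, ∀ v ∈ N, π g v ∈ N} {N' : Submodule ℂ V'} {hN' : ∀ g, ∀ v ∈ N', π' g v ∈ N'}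
    (hE : charEigenspace χ₀ π hab S ≤ N) (hE' : charEigenspace χ₀ π' hab S ≤ N')
    (h : RepEquiv (subRep π N hN) (subRep π' N' hN')) :
    ∃ Φ : charEigenspace χ₀ π hab S ≃ₗ[ℂ] charEigenspace χ₀ π' hab S,
      ∀ g (x : charEigenspace χ₀ π hab S) (hx : π g x ∈ charEigenspace χ₀ π hab S),
        (Φ ⟨π g x, hx⟩ : V') = π' g (Φ x) := by
  obtain ⟨e, he⟩ := h
  have hmap : ((charEigenspace χ₀ π hab S).comap N.subtype).map e.toLinearMap =
      (charEigenspace χ₀ π' hab S).comap N'.subtype := by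
    rw [← charEigenspace_subRep (hN := hN), ← charEigenspace_subRep (hN := hN')]
    ext y
    obtain ⟨x, rfl⟩ := e.surjective y
    simp only [Submodule.mem_map_equiv, e.symm_apply_apply, mem_charEigenspace, ← he, ← map_smul,
      e.injective.eq_iff]
  refine ⟨(Submodule.comapSubtypeEquivOfLe hE).symm ≪≫ₗ e.ofSubmodules _ _ hmap ≪≫ₗ
    Submodule.comapSubtypeEquivOfLe hE', fun g x _ ↦ ?_⟩
  exact congrArg Subtype.val (he g ⟨x, hE x.2⟩)

end EigenspaceEquiv

section RankOfSubrepresentations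

variable {n a b k : ℕ} {χ₀ : AddChar F ℂ}

lemma exists_le_hasRankAB_subRep {hab : a + b ≤ n} {π : Representation ℂ (GL (Fin n) F) V}
    (hχ₀ : χ₀ ≠ 1) (hrank : ∀ S, CharAppears χ₀ π hab S → S.rank ≤ k) {N : Submodule ℂ V}
    (hN_ne : N ≠ ⊥) (hN : ∀ g, ∀ v ∈ N, π g v ∈ N) :
    ∃ k' ≤ k, HasRankAB χ₀ (subRep π N hN) hab k' := by
  have := Submodule.nontrivial_iff_ne_bot.2 hN_ne
  obtain ⟨k', hk'⟩ := exists_hasRankAB hχ₀ (subRep π N hN) hab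
  obtain ⟨S, hS, rfl⟩ := hk'.1
  exact ⟨S.rank, hrank S hS.of_subRep, hk'⟩

variable {hab : a + b ≤ a + b} {π : Representation ℂ (GL (Fin (a + b)) F) V}
  {S : Matrix (Fin b) (Fin a) F}

lemma hasRankAB_subRep_iff (hS : S.rank = k)
    (hrank : ∀ T, CharAppears χ₀ π hab T → T.rank ≤ k) {N : Submodule ℂ V}
    {hN : ∀ g, ∀ v ∈ N, π g v ∈ N} :
    HasRankAB χ₀ (subRep π N hN) hab k ↔ ¬ Disjoint (charEigenspace χ₀ π hab S) N := by
  rw [← charAppears_subRep_iff (hN := hN)]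
  exact ⟨fun ⟨⟨T, hT, hTk⟩, _⟩ ↦ hT.of_rank_eq (hTk.trans hS.symm),
    fun h ↦ ⟨⟨S, h, hS⟩, fun T hT ↦ hrank T hT.of_subRep⟩⟩

variable {H U : Type} [Group H] [AddCommGroup U] [Module ℂ U] {σ : Representation ℂ H U}
  {j : H → GL (Fin (a + b)) F} {e : charEigenspace χ₀ π hab S ≃ₗ[ℂ] U}

lemma existsUnique_isIrred_hasRankAB_subRep [hσ : σ.IsIrreducible] (hS : S.rank = k)
    (hrank : ∀ T, CharAppears χ₀ π hab T → T.rank ≤ k) (he : IntertwinesAlong j π σ e) :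
    ∃! N : Submodule ℂ V, ∃ hN : ∀ g, ∀ v ∈ N, π g v ∈ N,
      IsIrred (subRep π N hN) ∧ HasRankAB χ₀ (subRep π N hN) hab k := by
  have : NeZero (Nat.card (GL (Fin (a + b)) F) : ℂ) := ⟨Nat.cast_ne_zero.2 Nat.card_pos.ne'⟩
  have : Nontrivial U := nontrivial_subrepresentation_iff.1 hσ.toNontrivial
  have hE : charEigenspace χ₀ π hab S ≠ ⊥ := Submodule.nontrivial_iff_ne_bot.1 e.nontrivial
  obtain ⟨N, hN, hN_unique⟩ :=
    existsUnique_isAtom_not_disjoint_jointEigenspace hE he.le_of_not_disjoint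
  simp only [isIrred_subRep_iff_isAtom, hasRankAB_subRep_iff hS hrank]
  refine ⟨N.toSubmodule, ⟨N.apply_mem_toSubmodule, hN⟩, fun N' ⟨hN'_inv, hN'⟩ ↦ ?_⟩
  exact congrArg Subrepresentation.toSubmodule (hN_unique ⟨N', hN'_inv⟩ hN')

lemma repEquiv_of_repEquiv_subRep [σ.IsIrreducible] {U' V' : Type} [AddCommGroup U'] [Module ℂ U']
    [AddCommGroup V'] [Module ℂ V'] {σ' : Representation ℂ H U'} [σ'.IsIrreducible]
    {π' : Representation ℂ (GL (Fin (a + b)) F) V'} {e' : charEigenspace χ₀ π' hab S ≃ₗ[ℂ] U'}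
    (hS : S.rank = k) (hrank : ∀ T, CharAppears χ₀ π hab T → T.rank ≤ k)
    (he : IntertwinesAlong j π σ e)
    (hrank' : ∀ T, CharAppears χ₀ π' hab T → T.rank ≤ k) (he' : IntertwinesAlong j π' σ' e')
    {N : Submodule ℂ V} {hN : ∀ g, ∀ v ∈ N, π g v ∈ N} {N' : Submodule ℂ V'}
    {hN' : ∀ g, ∀ v ∈ N', π' g v ∈ N'} (hN_rank : HasRankAB χ₀ (subRep π N hN) hab k)
    (hN'_rank : HasRankAB χ₀ (subRep π' N' hN') hab k)
    (h : RepEquiv (subRep π N hN) (subRep π' N' hN')) : RepEquiv σ σ' := by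
  obtain ⟨Φ, hΦ⟩ := exists_charEigenspace_equiv_of_repEquiv_subRep
    (he.le_of_not_disjoint ⟨N, hN⟩ ((hasRankAB_subRep_iff hS hrank).1 hN_rank))
    (he'.le_of_not_disjoint ⟨N', hN'⟩ ((hasRankAB_subRep_iff hS hrank').1 hN'_rank)) h
  refine ⟨e.symm ≪≫ₗ Φ ≪≫ₗ e', fun m u ↦ ?_⟩
  obtain ⟨x, rfl⟩ := e.surjective u
  obtain ⟨hjx, hex⟩ := he m x
  obtain ⟨hjΦx, heΦx⟩ := he' m (Φ x)
  calc e' (Φ (e.symm (σ m (e x)))) = e' (Φ ⟨π (j m) x, hjx⟩) := by rw [← hex, e.symm_apply_apply]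
    _ = e' ⟨π' (j m) (Φ x), hjΦx⟩ := congrArg e' (Subtype.ext (hΦ (j m) x hjx))
    _ = σ' m (e' (Φ (e.symm (e x)))) := by rw [heΦx, e.symm_apply_apply]

end RankOfSubrepresentations

lemma rank_le_of_charAppears_XiRep {a b k : ℕ} {hab : a + b ≤ a + b} {χ₀ : AddChar F ℂ}
    (hχ₀ : χ₀ ≠ 1) {Vν : Type} [AddCommGroup Vν] [Module ℂ Vν]
    {ν : Representation ℂ (GL (Fin k) F) Vν} {S : Matrix (Fin b) (Fin a) F}
    (hS : CharAppears (V := interSub ν (rRep (a + b) k)) χ₀ (XiRep (a + b) k ν) hab S) :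
    S.rank ≤ k :=
  rank_le_of_charAppears_lambdaRep hχ₀ hS.of_XiRep

theorem eta_correspondence_GL_general (χ₀ : AddChar F ℂ) (hχ₀ : χ₀ ≠ 1) {n k a b : ℕ}
    (hab : a + b = n) (hka : k ≤ a) (hkb : k ≤ b) :
    HasRankAB χ₀ (lambdaRep n k) hab.le k ∧
    (∀ (Vν : Type) [AddCommGroup Vν] [Module ℂ Vν] [FiniteDimensional ℂ Vν]
      (ν : Representation ℂ (GL (Fin k) F) Vν), IsIrred ν →
        (∃! N : Submodule ℂ (interSub ν (rRep n k)),
          ∃ hN : ∀ g, ∀ x ∈ N, XiRep n k ν g x ∈ N,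
            IsIrred (subRep (XiRep n k ν) N hN) ∧
              HasRankAB χ₀ (subRep (XiRep n k ν) N hN) hab.le k) ∧
        ∀ (N : Submodule ℂ (interSub ν (rRep n k)))
            (hN : ∀ g, ∀ x ∈ N, XiRep n k ν g x ∈ N),
          N ≠ ⊥ → ∃ k' ≤ k, HasRankAB χ₀ (subRep (XiRep n k ν) N hN) hab.le k') ∧
    ∀ (Vν Vν' : Type) [AddCommGroup Vν] [Module ℂ Vν] [FiniteDimensional ℂ Vν]
      [AddCommGroup Vν'] [Module ℂ Vν'] [FiniteDimensional ℂ Vν']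
      (ν : Representation ℂ (GL (Fin k) F) Vν) (ν' : Representation ℂ (GL (Fin k) F) Vν'),
      IsIrred ν → IsIrred ν' →
      ∀ (N : Submodule ℂ (interSub ν (rRep n k)))
        (hN : ∀ g, ∀ x ∈ N, XiRep n k ν g x ∈ N)
        (N' : Submodule ℂ (interSub ν' (rRep n k)))
        (hN' : ∀ g, ∀ x ∈ N', XiRep n k ν' g x ∈ N'),
        HasRankAB χ₀ (subRep (XiRep n k ν) N hN) hab.le k →
        HasRankAB χ₀ (subRep (XiRep n k ν') N' hN') hab.le k →
        RepEquiv (subRep (XiRep n k ν) N hN) (subRep (XiRep n k ν') N' hN') →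
        RepEquiv ν ν' := by
  obtain rfl := hab
  obtain ⟨L, B, hL⟩ := exists_mul_eq_one_of_le F hkb
  obtain ⟨C, R, hR⟩ := exists_mul_eq_one_of_le F hka
  obtain ⟨j, hj⟩ := exists_intertwinesAlong_xiEigenspaceEquiv hχ₀ hL hR le_rfl
  have hrank : (B * C).rank = k := by
    rw [rank_mul_eq_card_of_mul_eq_one hL hR, Fintype.card_fin]
  refine ⟨hasRankAB_lambdaRep hχ₀ hka hkb, fun Vν _ _ _ ν hν ↦ ⟨?_, fun N hN hN_ne ↦ ?_⟩,
    fun Vν Vν' _ _ _ _ _ _ ν ν' hν hν' N hN N' hN' hN_rank hN'_rank h ↦ ?_⟩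
  · have := isIrreducible_of_isIrred hν
    exact existsUnique_isIrred_hasRankAB_subRep (V := interSub ν (rRep (a + b) k)) hrank
      (fun _ ↦ rank_le_of_charAppears_XiRep hχ₀) (hj ν)
  · exact exists_le_hasRankAB_subRep (V := interSub ν (rRep (a + b) k)) hχ₀
      (fun _ ↦ rank_le_of_charAppears_XiRep hχ₀) hN_ne hN
  · have := isIrreducible_of_isIrred hν
    have := isIrreducible_of_isIrred hν'
    exact repEquiv_of_repEquiv_dual (repEquiv_of_repEquiv_subRep
      (V := interSub ν (rRep (a + b) k)) (V' := interSub ν' (rRep (a + b) k)) hrank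
      (fun _ ↦ rank_le_of_charAppears_XiRep hχ₀) (hj ν)
      (fun _ ↦ rank_le_of_charAppears_XiRep hχ₀) (hj ν') hN_rank hN'_rank h)

/-- (Theorem 5.3.1 c)).  Here `k ≤ n/2` is expressed as
`2 * k ≤ n`. -/
theorem eta_correspondence_GL
    (χ₀ : AddChar F ℂ) (hχ₀ : χ₀ ≠ 1)
    {n k : ℕ} (hk : 2 * k ≤ n) :
    -- (1) the restriction of ω to GL_n has U-rank k
    HasURank χ₀ (lambdaRep n k) k ∧
    -- (2) for every irreducible representation ν of GL_k, the representation
    -- Ξ_ν contains a unique irreducible subrepresentation of U-rank k (in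
    -- particular it occurs with multiplicity one), and every irreducible
    -- constituent of Ξ_ν has U-rank at most k (hence, apart from η(ν),
    -- strictly smaller U-rank)
    (∀ (Vν : Type) [AddCommGroup Vν] [Module ℂ Vν] [FiniteDimensional ℂ Vν]
      (ν : Representation ℂ (GL (Fin k) F) Vν), IsIrred ν →
        (∃! N : Submodule ℂ ↥(interSub ν (rRep n k)),
          ∃ hN : ∀ g, ∀ x ∈ N, XiRep n k ν g x ∈ N,
            IsIrred (subRep (XiRep n k ν) N hN) ∧
              HasURank χ₀ (subRep (XiRep n k ν) N hN) k) ∧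
        (∀ (N : Submodule ℂ ↥(interSub ν (rRep n k)))
            (hN : ∀ g, ∀ x ∈ N, XiRep n k ν g x ∈ N),
          IsIrred (subRep (XiRep n k ν) N hN) →
            ∃ k' ≤ k, HasURank χ₀ (subRep (XiRep n k ν) N hN) k')) ∧
    -- (3) ν ↦ η(ν) is injective: if the rank-k irreducible constituents of
    -- Ξ_ν and Ξ_ν' are equivalent, then ν and ν' are equivalent
    (∀ (Vν Vν' : Type) [AddCommGroup Vν] [Module ℂ Vν] [FiniteDimensional ℂ Vν]
      [AddCommGroup Vν'] [Module ℂ Vν'] [FiniteDimensional ℂ Vν']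
      (ν : Representation ℂ (GL (Fin k) F) Vν)
      (ν' : Representation ℂ (GL (Fin k) F) Vν'),
      IsIrred ν → IsIrred ν' →
      ∀ (N : Submodule ℂ ↥(interSub ν (rRep n k)))
        (hN : ∀ g, ∀ x ∈ N, XiRep n k ν g x ∈ N)
        (N' : Submodule ℂ ↥(interSub ν' (rRep n k)))
        (hN' : ∀ g, ∀ x ∈ N', XiRep n k ν' g x ∈ N'),
        IsIrred (subRep (XiRep n k ν) N hN) →
        HasURank χ₀ (subRep (XiRep n k ν) N hN) k →
        IsIrred (subRep (XiRep n k ν') N' hN') →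
        HasURank χ₀ (subRep (XiRep n k ν') N' hN') k →
        RepEquiv (subRep (XiRep n k ν) N hN) (subRep (XiRep n k ν') N' hN') →
        RepEquiv ν ν') := by
  obtain ⟨hω, hη, hinj⟩ := eta_correspondence_GL_general (F := F) χ₀ hχ₀
    (Nat.add_sub_of_le (Nat.div_le_self n 2)) (k := k) (by lia) (by lia)
  exact ⟨hω, fun Vν _ _ _ ν hν ↦ ⟨(hη Vν ν hν).1, fun N hN hN_irred ↦
      (hη Vν ν hν).2 N hN (ne_bot_of_isIrred_subRep hN_irred)⟩,
    fun Vν Vν' _ _ _ _ _ _ ν ν' hν hν' N hN N' hN' _ hN_rank _ hN'_rank ↦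
      hinj Vν Vν' ν ν' hν hν' N hN N' hN' hN_rank hN'_rank⟩

end Stmt7
end

section
/- Let π and ρ be finite-dimensional complex representations of GL_n(F_q) of U-ranks k and ℓ respectively, and suppose k + ℓ < n/2 − 1. Then the tensor product π ⊗ ρ has U-rank k + ℓ. -/
/-!
STATEMENT 9: If π, ρ are finite-dimensional complex representations of GL_n(F_q)
of U-ranks k and ℓ respectively, and k + ℓ < n/2 − 1, then π ⊗ ρ has U-rank k + ℓ.
-/

open Matrix
open scoped MatrixGroups


namespace Stmt9

variable {F : Type} [Field F] [Fintype F] [DecidableEq F]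

/-- The `n × n` matrix with the `a × b` matrix `X` placed in the block occupying
rows `0,…,a-1` and columns `n-b,…,n-1`, and `0` elsewhere. -/
def blockEmbed (n a b : ℕ) (X : Matrix (Fin a) (Fin b) F) : Matrix (Fin n) (Fin n) F :=
  Matrix.of fun i j =>
    if hi : (i : ℕ) < a then
      if hj : n - b ≤ (j : ℕ) ∧ (j : ℕ) - (n - b) < b then
        X ⟨i, hi⟩ ⟨(j : ℕ) - (n - b), hj.2⟩
      else 0
    else 0

lemma blockEmbed_mul_blockEmbed {n a b : ℕ} (hab : a + b ≤ n)
    (X Y : Matrix (Fin a) (Fin b) F) :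
    blockEmbed n a b X * blockEmbed n a b Y = 0 := by
  ext i j
  rw [Matrix.mul_apply, Matrix.zero_apply]
  apply Finset.sum_eq_zero
  intro k _
  rcases Nat.lt_or_ge (k : ℕ) a with hk | hk
  · have h2 : ¬ (n - b ≤ (k : ℕ) ∧ (k : ℕ) - (n - b) < b) := by
      rintro ⟨h, -⟩; omega
    have hz : blockEmbed n a b X i k = 0 := by
      unfold blockEmbed
      by_cases hi : (i : ℕ) < a
      · rw [Matrix.of_apply, dif_pos hi, dif_neg h2]
      · rw [Matrix.of_apply, dif_neg hi]
    rw [hz, zero_mul]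
  · have hz : blockEmbed n a b Y k j = 0 := by
      unfold blockEmbed
      rw [Matrix.of_apply, dif_neg (Nat.not_lt.2 hk)]
    rw [hz, mul_zero]

/-- The element `I_n + blockEmbed X` of `GL_n(F)`; for `a + b ≤ n` these elements
form the abelian subgroup `U_{a,b}` (identified with `(M_{a,b}(F), +)`). -/
def uU (n a b : ℕ) (hab : a + b ≤ n) (X : Matrix (Fin a) (Fin b) F) : GL (Fin n) F where
  val := 1 + blockEmbed n a b X
  inv := 1 - blockEmbed n a b X
  val_inv := by
    have h := blockEmbed_mul_blockEmbed hab X X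
    have e : (1 + blockEmbed n a b X) * (1 - blockEmbed n a b X)
        = 1 - blockEmbed n a b X * blockEmbed n a b X := by noncomm_ring
    rw [e, h, sub_zero]
  inv_val := by
    have h := blockEmbed_mul_blockEmbed hab X X
    have e : (1 - blockEmbed n a b X) * (1 + blockEmbed n a b X)
        = 1 - blockEmbed n a b X * blockEmbed n a b X := by noncomm_ring
    rw [e, h, sub_zero]

variable {V : Type} [AddCommGroup V] [Module ℂ V]

/-- The character `γ_T` of `U_{a,b} ≅ M_{a,b}(F_q)`, `γ_T(X) = χ₀(trace (T*X))`,
appears in (the restriction to `U_{a,b}` of) the representation `π`, i.e. its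
eigenspace is nonzero. -/
def CharAppears (χ₀ : AddChar F ℂ) {n : ℕ} (π : Representation ℂ (GL (Fin n) F) V)
    {a b : ℕ} (hab : a + b ≤ n) (T : Matrix (Fin b) (Fin a) F) : Prop :=
  ∃ v : V, v ≠ 0 ∧ ∀ X : Matrix (Fin a) (Fin b) F,
    π (uU n a b hab X) v = χ₀ ((T * X).trace) • v

/-- `rank_{a,b}(π) = k` : the maximal rank of a character of `U_{a,b}`
appearing in `π|U_{a,b}` is `k`.  (The rank of `γ_T` is `rank T`.) -/
def HasRankAB (χ₀ : AddChar F ℂ) {n : ℕ} (π : Representation ℂ (GL (Fin n) F) V)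
    {a b : ℕ} (hab : a + b ≤ n) (k : ℕ) : Prop :=
  (∃ T, CharAppears χ₀ π hab T ∧ T.rank = k) ∧
  (∀ T, CharAppears χ₀ π hab T → T.rank ≤ k)


/-- The `U`-rank of a representation `π` of `GL_n(F_q)` equals `k`:
this is `rank_{⌊n/2⌋,⌈n/2⌉}(π) = k`. -/
def HasURank (χ₀ : AddChar F ℂ) {n : ℕ} (π : Representation ℂ (GL (Fin n) F) V) (k : ℕ) : Prop :=
  HasRankAB χ₀ π (show n / 2 + (n - n / 2) ≤ n by omega) k

/-!
`π` and `ρ` are restricted to `U_{a,b}`, a finite abelian group, so they split into eigenspaces and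
the characters of `π ⊗ ρ` are exactly the products of a character of `π` with one of `ρ`. Since
`γ_T γ_S = γ_{T+S}`, subadditivity of the rank bounds the rank of `π ⊗ ρ` by `k + ℓ`. Conversely,
conjugation by `GL_a × GL_b` makes the set of `T` with `γ_T` occurring in `π` depend on `rank T`
only, and `b × a` matrices of ranks `k` and `ℓ` can be chosen with a sum of rank `k + ℓ` as soon as
`k + ℓ ≤ min a b`.
-/

open TensorProduct

section PairingMatrix

variable {K m n p q : Type*} [Semiring K] [DecidableEq m] [DecidableEq n] [Fintype p] [Fintype q]

variable (K) in
/-- The sum of the matrix units in positions `(f i, g i)`: a `0`-`1` matrix of rank `card p` when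
`f` and `g` are injective. -/
def pairingMatrix (f : p → m) (g : p → n) : Matrix m n K :=
  (1 : Matrix m m K).submatrix id f * (1 : Matrix n n K).submatrix g id

theorem pairingMatrix_inl_add_pairingMatrix_inr (f : p ⊕ q → m) (g : p ⊕ q → n) :
    pairingMatrix K (f ∘ Sum.inl) (g ∘ Sum.inl) + pairingMatrix K (f ∘ Sum.inr) (g ∘ Sum.inr) =
      pairingMatrix K f g := by
  ext i j
  simp only [pairingMatrix, Matrix.add_apply, mul_apply, submatrix_apply, Fintype.sum_sum_type]
  rfl

end PairingMatrix

section Rank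

theorem exists_linearEquiv_comp_eq_of_finrank_range_eq {K E E' : Type*} [DivisionRing K]
    [AddCommGroup E] [Module K E] [FiniteDimensional K E]
    [AddCommGroup E'] [Module K E'] [FiniteDimensional K E'] {f g : E →ₗ[K] E'}
    (h : Module.finrank K f.range = Module.finrank K g.range) :
    ∃ (α : E ≃ₗ[K] E) (β : E' ≃ₗ[K] E'), β.toLinearMap ∘ₗ f = g ∘ₗ α.toLinearMap := by
  have finrank_ker_eq : Module.finrank K f.ker = Module.finrank K g.ker := by
    have := f.finrank_range_add_finrank_ker
    have := g.finrank_range_add_finrank_ker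
    omega
  obtain ⟨α, hα⟩ := Submodule.exists_linearEquiv_restrict_eq
    (LinearEquiv.ofFinrankEq _ _ finrank_ker_eq)
  have map_ker_eq : f.ker.map α.toLinearMap = g.ker := by
    apply Submodule.eq_of_le_of_finrank_eq
    · rintro _ ⟨x, hx, rfl⟩
      rw [LinearEquiv.coe_coe, ← hα ⟨x, hx⟩]
      exact Subtype.property _
    · rw [LinearEquiv.finrank_map_eq, finrank_ker_eq]
  let rangeEquiv : f.range ≃ₗ[K] g.range :=
    f.quotKerEquivRange.symm ≪≫ₗ Submodule.Quotient.equiv _ _ α map_ker_eq ≪≫ₗ g.quotKerEquivRange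
  obtain ⟨β, hβ⟩ := Submodule.exists_linearEquiv_restrict_eq rangeEquiv
  refine ⟨α, β, LinearMap.ext fun x => ?_⟩
  have := hβ ⟨f x, f.mem_range_self x⟩
  simpa [rangeEquiv, LinearMap.quotKerEquivRange_symm_apply_image] using this.symm

variable {K m n : Type*} [Field K] [Fintype n]

theorem exists_gl_mulVecLin_eq {R : Type*} [CommRing R] [DecidableEq n]
    (e : (n → R) ≃ₗ[R] (n → R)) : ∃ A : GL n R, (A : Matrix n n R).mulVecLin = e.toLinearMap := by
  obtain ⟨A, hA⟩ := GeneralLinearGroup.toLin.surjective (.ofLinearEquiv e)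
  exact ⟨A, congrArg Units.val hA⟩

theorem exists_gl_mul_mul_eq_of_rank_eq [Fintype m] [DecidableEq m] [DecidableEq n]
    {T S : Matrix m n K} (h : T.rank = S.rank) :
    ∃ (B : GL m K) (A : GL n K), (B : Matrix m m K) * T * (A : Matrix n n K) = S := by
  obtain ⟨α, β, hαβ⟩ := exists_linearEquiv_comp_eq_of_finrank_range_eq h
  obtain ⟨A, hA⟩ := exists_gl_mulVecLin_eq α
  obtain ⟨B, hB⟩ := exists_gl_mulVecLin_eq β
  refine ⟨B, A⁻¹, ?_⟩
  have mul_eq_mul : (B : Matrix m m K) * T = S * (A : Matrix n n K) :=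
    toLin'.injective (by simp only [toLin'_apply', mulVecLin_mul, hA, hB, hαβ])
  rw [mul_eq_mul, Matrix.mul_assoc, Units.mul_inv, Matrix.mul_one]

theorem matrix_rank_add_le [Finite m] (T S : Matrix m n K) :
    (T + S).rank ≤ T.rank + S.rank := by
  have range_add_le : (T + S).mulVecLin.range ≤ T.mulVecLin.range ⊔ S.mulVecLin.range := by
    rw [mulVecLin_add]
    exact LinearMap.range_add_le _ _
  exact (Submodule.finrank_mono range_add_le).trans
    (Submodule.finrank_add_le_finrank_add_finrank _ _)

theorem rank_mul_eq_card_of_mul_eq_one {p : Type*} [Fintype m] [Fintype p] [DecidableEq p]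
    {P : Matrix m p K} {P' : Matrix p m K} {Q : Matrix p n K} {Q' : Matrix n p K}
    (hP : P' * P = 1) (hQ : Q * Q' = 1) : (P * Q).rank = Fintype.card p := by
  apply le_antisymm
  · exact (rank_mul_le_left _ _).trans (rank_le_card_width _)
  · calc Fintype.card p = (P' * (P * Q) * Q').rank := by
          rw [← Matrix.mul_assoc, hP, Matrix.one_mul, hQ, rank_one]
      _ ≤ (P * Q).rank := (rank_mul_le_left _ _).trans (rank_mul_le_right _ _)

theorem submatrix_one_mul_submatrix_one {p q R : Type*} [NonAssocSemiring R] [DecidableEq n]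
    (f : p → n) (g : q → n) :
    (1 : Matrix n n R).submatrix f id * (1 : Matrix n n R).submatrix id g =
      (1 : Matrix n n R).submatrix f g := by
  rw [← submatrix_mul _ _ _ _ _ Function.bijective_id, Matrix.one_mul]

theorem rank_pairingMatrix {p : Type*} [Fintype p] [Finite m] [DecidableEq m] [DecidableEq n]
    {f : p → m} {g : p → n} (hf : f.Injective) (hg : g.Injective) :
    (pairingMatrix K f g).rank = Fintype.card p := by
  classical
  have := Fintype.ofFinite m
  apply rank_mul_eq_card_of_mul_eq_one (P' := (1 : Matrix m m K).submatrix f id)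
    (Q' := (1 : Matrix n n K).submatrix id g)
  · rw [submatrix_one_mul_submatrix_one, submatrix_one _ hf]
  · rw [submatrix_one_mul_submatrix_one, submatrix_one _ hg]

theorem exists_rank_eq_rank_eq_rank_add_eq [Fintype m] {k l : ℕ}
    (hm : k + l ≤ Fintype.card m) (hn : k + l ≤ Fintype.card n) :
    ∃ T S : Matrix m n K, T.rank = k ∧ S.rank = l ∧ (T + S).rank = k + l := by
  classical
  obtain ⟨f⟩ : Nonempty (Fin k ⊕ Fin l ↪ m) := Function.Embedding.nonempty_of_card_le (by simpa)
  obtain ⟨g⟩ : Nonempty (Fin k ⊕ Fin l ↪ n) := Function.Embedding.nonempty_of_card_le (by simpa)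
  refine ⟨pairingMatrix K (f ∘ Sum.inl) (g ∘ Sum.inl),
    pairingMatrix K (f ∘ Sum.inr) (g ∘ Sum.inr), ?_, ?_, ?_⟩
  · simpa using rank_pairingMatrix (f.injective.comp Sum.inl_injective)
      (g.injective.comp Sum.inl_injective)
  · simpa using rank_pairingMatrix (f.injective.comp Sum.inr_injective)
      (g.injective.comp Sum.inr_injective)
  · rw [pairingMatrix_inl_add_pairingMatrix_inr]
    simpa using rank_pairingMatrix f.injective g.injective

end Rank

section Weights

theorem tprod_comp {K G H E E' : Type*} [CommSemiring K] [Monoid G] [Monoid H]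
    [AddCommMonoid E] [Module K E] [AddCommMonoid E'] [Module K E']
    (π : Representation K G E) (ρ : Representation K G E') (f : H →* G) :
    (π.tprod ρ).comp f = Representation.tprod (π.comp f) (ρ.comp f) :=
  rfl

theorem tmul_ne_zero {K E E' : Type*} [Field K] [AddCommGroup E] [Module K E] [AddCommGroup E']
    [Module K E'] {v : E} {w : E'} (hv : v ≠ 0) (hw : w ≠ 0) : v ⊗ₜ[K] w ≠ 0 := by
  obtain ⟨f, hf⟩ := Module.Projective.exists_dual_ne_zero K hv
  obtain ⟨g, hg⟩ := Module.Projective.exists_dual_ne_zero K hw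
  intro h
  have : f v * g w = 0 := by
    simpa using congrArg (LinearMap.mul' K K ∘ TensorProduct.map f g) h
  exact mul_ne_zero hf hg this

variable {M : Type*} [AddCommGroup M] {E : Type*} [AddCommGroup E] [Module ℂ E]

/-- `ψ` is a weight of the representation `σ` of the additive group `M` when the `ψ`-eigenspace of
`σ` is nonzero. -/
def IsWeight (σ : Representation ℂ (Multiplicative M) E) (ψ : AddChar M ℂ) : Prop :=
  ∃ v : E, v ≠ 0 ∧ ∀ x, σ (Multiplicative.ofAdd x) v = ψ x • v

variable {E' : Type*} [AddCommGroup E'] [Module ℂ E']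

theorem IsWeight.tprod {σ : Representation ℂ (Multiplicative M) E}
    {τ : Representation ℂ (Multiplicative M) E'} {φ θ : AddChar M ℂ}
    (hφ : IsWeight σ φ) (hθ : IsWeight τ θ) : IsWeight (σ.tprod τ) (φ * θ) := by
  obtain ⟨v, hv, hvφ⟩ := hφ
  obtain ⟨w, hw, hwθ⟩ := hθ
  refine ⟨v ⊗ₜ w, tmul_ne_zero hv hw, fun x => ?_⟩
  rw [Representation.tprod_apply, map_tmul, hvφ, hwθ, smul_tmul_smul, AddChar.mul_apply]

variable [Fintype M]

/-- The projection onto the `ψ`-eigenspace of `σ`, as an average over `M`. -/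
noncomputable def weightProj (σ : Representation ℂ (Multiplicative M) E) (ψ : AddChar M ℂ) :
    Module.End ℂ E :=
  (Fintype.card M : ℂ)⁻¹ • ∑ x, ψ (-x) • σ (.ofAdd x)

theorem weightProj_mul_apply (σ : Representation ℂ (Multiplicative M) E) (ψ : AddChar M ℂ)
    (y : M) : weightProj σ ψ * σ (.ofAdd y) = ψ y • weightProj σ ψ := by
  rw [weightProj, smul_mul_assoc, smul_comm]
  congr 1
  rw [Finset.sum_mul, Finset.smul_sum]
  refine Fintype.sum_equiv (Equiv.addRight y) _ _ fun x => ?_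
  rw [smul_mul_assoc, ← map_mul, ← ofAdd_add, smul_smul, ← AddChar.map_add_eq_mul]
  simp

theorem apply_mul_weightProj (σ : Representation ℂ (Multiplicative M) E) (ψ : AddChar M ℂ)
    (y : M) : σ (.ofAdd y) * weightProj σ ψ = ψ y • weightProj σ ψ := by
  rw [← weightProj_mul_apply, weightProj, smul_mul_assoc, mul_smul_comm, Finset.sum_mul,
    Finset.mul_sum]
  simp only [smul_mul_assoc, mul_smul_comm, ← map_mul, mul_comm]

theorem sum_weightProj (σ : Representation ℂ (Multiplicative M) E) :
    ∑ ψ : AddChar M ℂ, weightProj σ ψ = 1 := by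
  classical
  have card_ne_zero : (Fintype.card M : ℂ) ≠ 0 := Nat.cast_ne_zero.2 Fintype.card_ne_zero
  simp only [weightProj]
  rw [← Finset.smul_sum, Finset.sum_comm]
  simp only [← Finset.sum_smul, AddChar.sum_apply_eq_ite, neg_eq_zero, ite_smul, zero_smul,
    Finset.sum_ite_eq', Finset.mem_univ, if_true, ofAdd_zero, map_one]
  exact inv_smul_smul₀ card_ne_zero 1

theorem isWeight_of_weightProj_ne_zero {σ : Representation ℂ (Multiplicative M) E}
    {ψ : AddChar M ℂ} (h : weightProj σ ψ ≠ 0) : IsWeight σ ψ := by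
  obtain ⟨v, hv⟩ := DFunLike.ne_iff.1 h
  exact ⟨_, hv, fun x => LinearMap.congr_fun (apply_mul_weightProj σ ψ x) v⟩

theorem sum_map_weightProj_weightProj (σ : Representation ℂ (Multiplicative M) E)
    (τ : Representation ℂ (Multiplicative M) E') :
    ∑ φ, ∑ θ, TensorProduct.map (weightProj σ φ) (weightProj τ θ) = LinearMap.id := by
  simp only [← mapBilinear_apply, ← map_sum, ← LinearMap.sum_apply, sum_weightProj]
  exact TensorProduct.map_id

theorem map_weightProj_comp_tprod (σ : Representation ℂ (Multiplicative M) E)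
    (τ : Representation ℂ (Multiplicative M) E') (φ θ : AddChar M ℂ) (x : M) :
    TensorProduct.map (weightProj σ φ) (weightProj τ θ) ∘ₗ σ.tprod τ (.ofAdd x) =
      (φ * θ) x • TensorProduct.map (weightProj σ φ) (weightProj τ θ) := by
  rw [Representation.tprod_apply, ← TensorProduct.map_comp, ← Module.End.mul_eq_comp,
    ← Module.End.mul_eq_comp, weightProj_mul_apply, weightProj_mul_apply, map_smul_left,
    map_smul_right, smul_smul, AddChar.mul_apply]

theorem IsWeight.exists_mul_eq_of_tprod {M : Type*} [AddCommGroup M] [Finite M]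
    {σ : Representation ℂ (Multiplicative M) E}
    {τ : Representation ℂ (Multiplicative M) E'} {ψ : AddChar M ℂ}
    (hψ : IsWeight (σ.tprod τ) ψ) :
    ∃ φ θ, IsWeight σ φ ∧ IsWeight τ θ ∧ φ * θ = ψ := by
  have := Fintype.ofFinite M
  obtain ⟨v, hv, hvψ⟩ := hψ
  obtain ⟨φ, θ, hφθ⟩ :
      ∃ φ θ, TensorProduct.map (weightProj σ φ) (weightProj τ θ) v ≠ 0 := by
    by_contra! map_eq_zero
    apply hv
    simpa [map_eq_zero] using (LinearMap.congr_fun (sum_map_weightProj_weightProj σ τ) v).symm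
  refine ⟨φ, θ, isWeight_of_weightProj_ne_zero fun h => hφθ ?_,
    isWeight_of_weightProj_ne_zero fun h => hφθ ?_, DFunLike.ext _ _ fun x => ?_⟩
  · rw [h, map_zero_left, LinearMap.zero_apply]
  · rw [h, map_zero_right, LinearMap.zero_apply]
  · apply smul_left_injective ℂ hφθ
    have := LinearMap.congr_fun (map_weightProj_comp_tprod σ τ φ θ x) v
    rw [LinearMap.comp_apply, hvψ, map_smul] at this
    exact this.symm

end Weights

section TraceCharacters

variable {R C m n : Type*} [Ring R] [CommMonoid C] [Fintype m] [Fintype n]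

/-- The character `γ_T : X ↦ χ (trace (T * X))` of the additive group of `m × n` matrices. -/
def traceChar (χ : AddChar R C) (T : Matrix n m R) : AddChar (Matrix m n R) C where
  toFun X := χ (T * X).trace
  map_zero_eq_one' := by simp
  map_add_eq_mul' X Y := by rw [Matrix.mul_add, trace_add, AddChar.map_add_eq_mul]

theorem traceChar_apply (χ : AddChar R C) (T : Matrix n m R) (X : Matrix m n R) :
    traceChar χ T X = χ (T * X).trace := rfl

theorem traceChar_add (χ : AddChar R C) (T S : Matrix n m R) :
    traceChar χ (T + S) = traceChar χ T * traceChar χ S := by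
  ext X
  simp only [AddChar.mul_apply, traceChar_apply, Matrix.add_mul, trace_add,
    AddChar.map_add_eq_mul]

theorem traceChar_injective {K : Type*} [Field K] {χ : AddChar K C} (hχ : χ ≠ 1) :
    Function.Injective (traceChar χ : Matrix n m K → AddChar (Matrix m n K) C) := by
  intro T S hTS
  rw [ext_iff_trace_mul_right]
  intro X
  rw [← sub_eq_zero]
  by_contra trace_ne_zero
  apply AddChar.IsPrimitive.of_ne_one hχ trace_ne_zero
  ext c
  have := DFunLike.congr_fun hTS (c • X)
  simp only [traceChar_apply, Matrix.mul_smul, trace_smul, smul_eq_mul] at this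
  rw [AddChar.mulShift_apply, sub_mul, mul_comm _ c, mul_comm _ c, sub_eq_add_neg,
    AddChar.map_add_eq_mul, this, ← AddChar.map_add_eq_mul, add_neg_cancel, AddChar.map_zero_eq_one,
    AddChar.one_apply]

theorem traceChar_surjective {K : Type*} [Field K] [Finite K] {χ : AddChar K ℂ} (hχ : χ ≠ 1) :
    Function.Surjective (traceChar χ : Matrix n m K → AddChar (Matrix m n K) ℂ) := by
  classical
  have := Fintype.ofFinite K
  refine ((Fintype.bijective_iff_injective_and_card _).2 ⟨traceChar_injective hχ, ?_⟩).2
  rw [AddChar.card_eq]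
  exact Fintype.card_congr (transposeAddEquiv n m K).toEquiv

end TraceCharacters

section Corner

variable {R m n : Type*} [Fintype m] [Fintype n] [DecidableEq m] [DecidableEq n]

/-- For `P` with left inverse `P'`, the matrix that acts as `A` on the image of `P` and as the
identity on the kernel of `P'`. -/
def extendByOne [Ring R] {P : Matrix n m R} {P' : Matrix m n R} (hP : P' * P = 1) :
    Matrix m m R →* Matrix n n R where
  toFun A := 1 + P * (A - 1) * P'
  map_one' := by simp
  map_mul' A B := by
    have mul_eq : P * (A - 1) * P' * (P * (B - 1) * P') = P * ((A - 1) * (B - 1)) * P' := by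
      rw [Matrix.mul_assoc P (B - 1), Matrix.mul_assoc (P * (A - 1)), ← Matrix.mul_assoc P' P, hP,
        Matrix.one_mul]
      simp only [Matrix.mul_assoc]
    have mul_sub_one : A * B - 1 = (A - 1) + (B - 1) + (A - 1) * (B - 1) := by noncomm_ring
    rw [add_mul, mul_add, mul_add, mul_eq, one_mul, one_mul, mul_one, mul_sub_one]
    simp only [Matrix.mul_add, Matrix.add_mul]
    abel

theorem extendByOne_mul [Ring R] {P : Matrix n m R} {P' : Matrix m n R} (hP : P' * P = 1)
    (A : Matrix m m R) : extendByOne hP A * P = P * A := by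
  change (1 + P * (A - 1) * P') * P = P * A
  rw [Matrix.add_mul, Matrix.one_mul, Matrix.mul_assoc, hP, Matrix.mul_one, Matrix.mul_sub,
    Matrix.mul_one, add_sub_cancel]

theorem mul_extendByOne [Ring R] {P : Matrix n m R} {P' : Matrix m n R} (hP : P' * P = 1)
    (A : Matrix m m R) : P' * extendByOne hP A = A * P' := by
  change P' * (1 + P * (A - 1) * P') = A * P'
  rw [Matrix.mul_add, Matrix.mul_one, ← Matrix.mul_assoc, ← Matrix.mul_assoc, hP, Matrix.one_mul,
    Matrix.sub_mul, Matrix.one_mul, add_sub_cancel]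

theorem extendByOne_mul_eq_self [Ring R] {l : Type*} {P : Matrix n m R} {P' : Matrix m n R}
    (hP : P' * P = 1) {Q : Matrix n l R} (hQ : P' * Q = 0) (A : Matrix m m R) :
    extendByOne hP A * Q = Q := by
  change (1 + P * (A - 1) * P') * Q = Q
  rw [Matrix.add_mul, Matrix.one_mul, Matrix.mul_assoc, hQ, Matrix.mul_zero, add_zero]

theorem mul_extendByOne_eq_self [Ring R] {l : Type*} {P : Matrix n m R} {P' : Matrix m n R}
    (hP : P' * P = 1) {Q : Matrix l n R} (hQ : Q * P = 0) (A : Matrix m m R) :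
    Q * extendByOne hP A = Q := by
  change Q * (1 + P * (A - 1) * P') = Q
  rw [Matrix.mul_add, Matrix.mul_one, ← Matrix.mul_assoc, ← Matrix.mul_assoc, hQ, Matrix.zero_mul,
    Matrix.zero_mul, add_zero]

theorem exists_gl_mul_eq_mul_and_mul_eq_mul [CommRing R] {l : Type*} [Fintype l] [DecidableEq l]
    {P : Matrix n m R} {P' : Matrix m n R} {Q : Matrix l n R} {Q' : Matrix n l R}
    (hP : P' * P = 1) (hQ : Q * Q' = 1) (hQP : Q * P = 0) (A : GL m R) (B : GL l R) :
    ∃ g : GL n R, (g : Matrix n n R) * P = P * (A : Matrix m m R) ∧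
      Q * (g : Matrix n n R) = (B : Matrix l l R) * Q := by
  refine ⟨Units.map (extendByOne hP) A * Units.map (extendByOne hQ) B, ?_, ?_⟩
  · rw [Units.val_mul, Units.coe_map, Units.coe_map, Matrix.mul_assoc,
      extendByOne_mul_eq_self hQ hQP, extendByOne_mul]
  · rw [Units.val_mul, Units.coe_map, Units.coe_map, ← Matrix.mul_assoc,
      mul_extendByOne_eq_self hP hQP, mul_extendByOne]

end Corner

section Unipotent

theorem exists_blockEmbed_eq_mul_mul (K : Type) [Field K] {n a b : ℕ} (hab : a + b ≤ n) :
    ∃ (P : Matrix (Fin n) (Fin a) K) (P' : Matrix (Fin a) (Fin n) K)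
      (Q : Matrix (Fin b) (Fin n) K) (Q' : Matrix (Fin n) (Fin b) K),
      P' * P = 1 ∧ Q * Q' = 1 ∧ Q * P = 0 ∧
        ∀ X : Matrix (Fin a) (Fin b) K, blockEmbed n a b X = P * X * Q := by
  obtain ⟨top, val_top⟩ : ∃ f : Fin a ↪ Fin n, ∀ i, (f i : ℕ) = i :=
    ⟨Fin.castLEEmb (by omega), fun _ => rfl⟩
  obtain ⟨right, val_right⟩ : ∃ f : Fin b ↪ Fin n, ∀ j, (f j : ℕ) = n - b + j :=
    ⟨(Fin.natAddEmb (n - b)).trans (finCongr (by omega)).toEmbedding, fun _ => rfl⟩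
  refine ⟨(1 : Matrix _ _ K).submatrix id top, (1 : Matrix _ _ K).submatrix top id,
    (1 : Matrix _ _ K).submatrix right id, (1 : Matrix _ _ K).submatrix id right,
    ?_, ?_, ?_, fun X => ?_⟩
  · rw [submatrix_one_mul_submatrix_one, submatrix_one _ top.injective]
  · rw [submatrix_one_mul_submatrix_one, submatrix_one _ right.injective]
  · rw [submatrix_one_mul_submatrix_one]
    ext j i
    refine one_apply_ne fun h => ?_
    have := congrArg Fin.val h
    grind
  · ext i j
    by_cases hi : ∃ i', top i' = i
    · obtain ⟨i, rfl⟩ := hi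
      by_cases hj : ∃ j', right j' = j
      · obtain ⟨j, rfl⟩ := hj
        have : ¬ n - b + j + b < n := by omega
        simp [mul_apply, one_apply, blockEmbed, val_top, val_right, this]
      · have : ¬ n ≤ (j : ℕ) + b := fun h => hj ⟨⟨j - (n - b), by omega⟩, by ext; grind⟩
        rw [not_exists] at hj
        simp [mul_apply, one_apply, blockEmbed, hj, this]
    · have : ¬ (i : ℕ) < a := fun h => hi ⟨⟨i, h⟩, by ext; grind⟩
      have hi' : ∀ i', i ≠ top i' := fun i' h => hi ⟨i', h.symm⟩
      simp [mul_apply, one_apply, blockEmbed, hi', this]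

variable {n a b : ℕ} (hab : a + b ≤ n)

/-- The identification `X ↦ I_n + X` of `(M_{a,b}(F), +)` with `U_{a,b}`, as a homomorphism into
`GL_n(F)`. -/
def uUHom : Multiplicative (Matrix (Fin a) (Fin b) F) →* GL (Fin n) F :=
  MonoidHom.mk' (fun X => uU n a b hab X.toAdd) fun X Y => by
    obtain ⟨P, -, Q, -, -, -, -, hblock⟩ := exists_blockEmbed_eq_mul_mul F hab
    apply Units.ext
    change 1 + blockEmbed n a b (X.toAdd + Y.toAdd) =
      (1 + blockEmbed n a b X.toAdd) * (1 + blockEmbed n a b Y.toAdd)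
    have blockEmbed_add : blockEmbed n a b (X.toAdd + Y.toAdd) =
        blockEmbed n a b X.toAdd + blockEmbed n a b Y.toAdd := by
      simp only [hblock, Matrix.mul_add, Matrix.add_mul]
    rw [blockEmbed_add, add_mul, mul_add, mul_add, blockEmbed_mul_blockEmbed hab, one_mul, one_mul,
      mul_one, add_zero, add_assoc, add_comm (blockEmbed n a b Y.toAdd)]

theorem exists_gl_uU_mul_eq_mul_uU (A : GL (Fin a) F) (B : GL (Fin b) F) :
    ∃ g : GL (Fin n) F, ∀ X : Matrix (Fin a) (Fin b) F,
      uU n a b hab X * g = g * uU n a b hab (A.val * X * B.val) := by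
  obtain ⟨P, P', Q, Q', hP, hQ, hQP, hblock⟩ := exists_blockEmbed_eq_mul_mul F hab
  obtain ⟨g, hgP, hQg⟩ := exists_gl_mul_eq_mul_and_mul_eq_mul hP hQ hQP A⁻¹ B
  refine ⟨g, fun X => Units.ext ?_⟩
  change (1 + blockEmbed n a b X) * g.val = g.val * (1 + blockEmbed n a b (A.val * X * B.val))
  rw [add_mul, mul_add, one_mul, mul_one, hblock, hblock, add_right_inj]
  calc P * X * Q * g.val = P * X * (B.val * Q) := by rw [Matrix.mul_assoc, hQg]
    _ = P * (A⁻¹.val * A.val) * X * (B.val * Q) := by rw [Units.inv_mul, Matrix.mul_one]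
    _ = P * A⁻¹.val * (A.val * X * B.val) * Q := by simp only [Matrix.mul_assoc]
    _ = g.val * (P * (A.val * X * B.val) * Q) := by rw [← hgP]; simp only [Matrix.mul_assoc]

end Unipotent

section CharAppears

variable {χ₀ : AddChar F ℂ} {W : Type} [AddCommGroup W] [Module ℂ W] {n : ℕ}
  {π : Representation ℂ (GL (Fin n) F) V} {ρ : Representation ℂ (GL (Fin n) F) W}
  {a b : ℕ} {hab : a + b ≤ n} {T S R : Matrix (Fin b) (Fin a) F}

theorem charAppears_iff_isWeight :
    CharAppears χ₀ π hab T ↔ IsWeight (π.comp (uUHom hab)) (traceChar χ₀ T) :=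
  Iff.rfl

theorem CharAppears.tprod (hT : CharAppears χ₀ π hab T) (hS : CharAppears χ₀ ρ hab S) :
    CharAppears χ₀ (π.tprod ρ) hab (T + S) := by
  rw [charAppears_iff_isWeight] at hT hS ⊢
  rw [tprod_comp, traceChar_add]
  exact hT.tprod hS

theorem CharAppears.exists_add_eq_of_tprod (hχ₀ : χ₀ ≠ 1)
    (hR : CharAppears χ₀ (π.tprod ρ) hab R) :
    ∃ T S, CharAppears χ₀ π hab T ∧ CharAppears χ₀ ρ hab S ∧ T + S = R := by
  rw [charAppears_iff_isWeight, tprod_comp] at hR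
  obtain ⟨φ, θ, hφ, hθ, hφθ⟩ := hR.exists_mul_eq_of_tprod
  obtain ⟨T, rfl⟩ := traceChar_surjective hχ₀ φ
  obtain ⟨S, rfl⟩ := traceChar_surjective hχ₀ θ
  rw [← traceChar_add] at hφθ
  exact ⟨T, S, hφ, hθ, traceChar_injective hχ₀ hφθ⟩

theorem CharAppears.gl_mul_mul (hT : CharAppears χ₀ π hab T) (B : GL (Fin b) F)
    (A : GL (Fin a) F) : CharAppears χ₀ π hab (B.val * T * A.val) := by
  obtain ⟨g, hg⟩ := exists_gl_uU_mul_eq_mul_uU hab A B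
  obtain ⟨v, hv, hvT⟩ := hT
  refine ⟨π g v, (map_ne_zero_iff _ (π.apply_bijective g).injective).2 hv, fun X => ?_⟩
  have trace_eq : (T * (A.val * X * B.val)).trace = (B.val * T * A.val * X).trace := by
    rw [← Matrix.mul_assoc, trace_mul_comm]
    simp only [Matrix.mul_assoc]
  rw [← Module.End.mul_apply, ← map_mul, hg, map_mul, Module.End.mul_apply, hvT, map_smul, trace_eq]

theorem CharAppears.of_rank_eq (hT : CharAppears χ₀ π hab T) (h : T.rank = S.rank) :
    CharAppears χ₀ π hab S := by
  obtain ⟨B, A, rfl⟩ := exists_gl_mul_mul_eq_of_rank_eq h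
  exact hT.gl_mul_mul B A

theorem uRank_tprod_general (hχ₀ : χ₀ ≠ 1) {k ℓ : ℕ}
    (hπ : HasRankAB χ₀ π hab k) (hρ : HasRankAB χ₀ ρ hab ℓ) (ha : k + ℓ ≤ a) (hb : k + ℓ ≤ b) :
    HasRankAB χ₀ (π.tprod ρ) hab (k + ℓ) := by
  obtain ⟨⟨T, hT, rank_T⟩, rank_le_k⟩ := hπ
  obtain ⟨⟨S, hS, rank_S⟩, rank_le_ℓ⟩ := hρ
  refine ⟨?_, fun R hR => ?_⟩
  · obtain ⟨T', S', rank_T', rank_S', rank_add⟩ :=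
      exists_rank_eq_rank_eq_rank_add_eq (K := F) (m := Fin b) (n := Fin a) (by simpa) (by simpa)
    have hT' : CharAppears χ₀ π hab T' := hT.of_rank_eq (rank_T.trans rank_T'.symm)
    have hS' : CharAppears χ₀ ρ hab S' := hS.of_rank_eq (rank_S.trans rank_S'.symm)
    exact ⟨T' + S', hT'.tprod hS', rank_add⟩
  · obtain ⟨T', S', hT', hS', rfl⟩ := hR.exists_add_eq_of_tprod hχ₀
    calc (T' + S').rank ≤ T'.rank + S'.rank := matrix_rank_add_le T' S'
      _ ≤ k + ℓ := add_le_add (rank_le_k T' hT') (rank_le_ℓ S' hS')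

end CharAppears

/-- (Proposition 6.3.1 a)). Tensor products add `U`-ranks in
the low-rank range: here `k + ℓ < n/2 - 1` is expressed as `2*(k+ℓ) + 2 < n`. -/
theorem uRank_tprod
    (χ₀ : AddChar F ℂ) (hχ₀ : χ₀ ≠ 1)
    {n : ℕ} {V W : Type} [AddCommGroup V] [Module ℂ V] [FiniteDimensional ℂ V]
    [AddCommGroup W] [Module ℂ W] [FiniteDimensional ℂ W]
    (π : Representation ℂ (GL (Fin n) F) V) (ρ : Representation ℂ (GL (Fin n) F) W)
    {k ℓ : ℕ}
    (hπ : HasURank χ₀ π k) (hρ : HasURank χ₀ ρ ℓ)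
    (hlow : 2 * (k + ℓ) + 2 < n) :
    HasURank χ₀ (π.tprod ρ) (k + ℓ) := by
  exact uRank_tprod_general hχ₀ hπ hρ (by omega) (by omega)

end Stmt9
end
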